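/- arXiv:1109.5472 — 10 statements merged into one kernel-verified Lean document; each statement's English description precedes it below -/
import Mathlib

section
/- Let n ≥ 1, let A be an n×n positive semidefinite complex matrix, and let η and η' be partitions of n with η ⊵ η' in the dominance order. Then (n choose η)⁻¹ · Re ∫_{U(n)} d_{[η]}(u A u*) du ≥ (n choose η')⁻¹ · Re ∫_{U(n)} d_{[η']}(u A u*) du, where the integrals are over the unitary group U(n) with respect to its Haar probability measure. (Averaged Merris–Watkins monotonicity conjecture, Theorem 7.) -/
open MeasureTheory Matrix
open scoped ComplexOrder

noncomputable instance {n : ℕ} : MeasurableSpace (Matrix.unitaryGroup (Fin n) ℂ) := borel _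
instance {n : ℕ} : BorelSpace (Matrix.unitaryGroup (Fin n) ℂ) := ⟨rfl⟩

/-- conjugation of `A` by the unitary `u` : `u * A * u*` -/
noncomputable def conjU {n : ℕ} (A : Matrix (Fin n) (Fin n) ℂ) (u : Matrix.unitaryGroup (Fin n) ℂ) :
    Matrix (Fin n) (Fin n) ℂ :=
  (u : Matrix (Fin n) (Fin n) ℂ) * A * star (u : Matrix (Fin n) (Fin n) ℂ)

/-- the induced character `[η]` of the symmetric group -/
noncomputable def inducedChar (n : ℕ) (η : Fin n → ℕ) (σ : Equiv.Perm (Fin n)) : ℕ :=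
  Nat.card {f : Fin n → Fin n // (∀ j, Nat.card {i // f i = j} = η j) ∧ f ∘ σ = f}

/-- generalized matrix function attached to the induced character `[η]` -/
noncomputable def dInduced {n : ℕ} (η : Fin n → ℕ) (M : Matrix (Fin n) (Fin n) ℂ) : ℂ :=
  ∑ σ : Equiv.Perm (Fin n), (inducedChar n η σ : ℂ) * ∏ i, M i (σ i)

/-- `η` is a partition of `n` with at most `n` parts -/
def IsPartition (n : ℕ) (η : Fin n → ℕ) : Prop := Antitone η ∧ ∑ i, η i = n

/-- dominance order on partitions -/
def Dominates {n : ℕ} (η η' : Fin n → ℕ) : Prop :=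
  ∀ j : Fin n, ∑ i ∈ Finset.Iic j, η' i ≤ ∑ i ∈ Finset.Iic j, η i

/-- number of preimages of `j` -/
def cont {n : ℕ} (f : Fin n → Fin n) (j : Fin n) : ℕ := (Finset.univ.filter fun i => f i = j).card

lemma nat_card_eq_cont {n : ℕ} (f : Fin n → Fin n) (j : Fin n) :
    Nat.card {i // f i = j} = cont f j := by
  simp [cont, Fintype.card_subtype]

lemma prod_comp_cont {n : ℕ} {R : Type*} [CommMonoid R] (f : Fin n → Fin n) (x : Fin n → R) :
    ∏ a, x (f a) = ∏ j, x j ^ cont f j := by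
  rw [← Finset.prod_fiberwise' (s := Finset.univ) f x]
  simp [cont]

lemma card_cont {n : ℕ} (η : Fin n → ℕ) (h : ∑ i, η i = n) :
    (Finset.univ.filter fun f : Fin n → Fin n => cont f = η).card
      = Nat.multinomial Finset.univ η := by
  have h1 := Finset.sum_pow_eq_sum_piAntidiag (R := MvPolynomial (Fin n) ℕ) Finset.univ
    (fun i => MvPolynomial.X i) n
  have h2 : (∑ i : Fin n, (MvPolynomial.X i : MvPolynomial (Fin n) ℕ)) ^ n
      = ∑ f : Fin n → Fin n, MvPolynomial.monomial (Finsupp.equivFunOnFinite.symm (cont f)) 1 := by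
    have := Finset.prod_univ_sum (fun _ : Fin n => (Finset.univ : Finset (Fin n)))
      (fun _ i => (MvPolynomial.X i : MvPolynomial (Fin n) ℕ))
    simp only [Finset.prod_const, Finset.card_univ, Fintype.card_fin, Fintype.piFinset_univ] at this
    rw [this]
    refine Finset.sum_congr rfl fun f _ => ?_
    rw [prod_comp_cont f, MvPolynomial.monomial_eq]
    simp [Finsupp.prod_fintype]
  rw [h2] at h1
  have h3 := congrArg (MvPolynomial.coeff (Finsupp.equivFunOnFinite.symm η)) h1
  have h4 : ∀ k : Fin n → ℕ, ((Nat.multinomial Finset.univ k : ℕ) : MvPolynomial (Fin n) ℕ) *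
      ∏ i, MvPolynomial.X i ^ k i =
      MvPolynomial.monomial (Finsupp.equivFunOnFinite.symm k) (Nat.multinomial Finset.univ k) := by
    intro k
    rw [MvPolynomial.monomial_eq]
    simp [Finsupp.prod_fintype]
  simp only [h4, MvPolynomial.coeff_sum, MvPolynomial.coeff_monomial,
    EmbeddingLike.apply_eq_iff_eq] at h3
  rw [Finset.sum_ite_eq'] at h3
  simp only [Finset.mem_piAntidiag, h, Finset.mem_univ] at h3
  rw [Finset.card_filter]
  simpa using h3

lemma abel_nonneg : ∀ (n : ℕ) (v d : Fin n → ℝ), Antitone v → (∀ i, 0 ≤ v i) →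
    (∀ j, 0 ≤ ∑ i ∈ Finset.Iic j, d i) → 0 ≤ ∑ i, v i * d i := by
  intro n
  induction n with
  | zero => intro v d _ _ _; simp
  | succ m ih =>
    intro v d hv h0 hd
    have key := ih (fun i => v i.castSucc - v (Fin.last m)) (fun i => d i.castSucc)
      (fun i j hij => by
        have := hv (Fin.castSucc_le_castSucc_iff.2 hij)
        simpa using this)
      (fun i => by
        have := hv (Fin.le_last i.castSucc)
        simpa using this)
      (fun j => by
        have := hd j.castSucc
        have e : Finset.Iic j.castSucc = (Finset.Iic j).map Fin.castSuccEmb := by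
          simp
        rw [e, Finset.sum_map] at this
        simpa using this)
    have tot := hd (Fin.last m)
    have e : Finset.Iic (Fin.last m) = Finset.univ := by
      ext i; simp [Fin.le_last]
    rw [e] at tot
    have : ∑ i, v i * d i = ∑ i : Fin m, (v i.castSucc - v (Fin.last m)) * d i.castSucc
        + v (Fin.last m) * ∑ i, d i := by
      simp only [Fin.sum_univ_castSucc, sub_mul, Finset.sum_sub_distrib, mul_add, Finset.mul_sum]
      ring
    rw [this]
    have := mul_nonneg (h0 (Fin.last m)) tot
    linarith

lemma abel_zero (n : ℕ) (v d : Fin n → ℝ) (hv : Antitone v) 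
    (hd : ∀ j, 0 ≤ ∑ i ∈ Finset.Iic j, d i) (ht : ∑ i, d i = 0) : 0 ≤ ∑ i, v i * d i := by
  cases n with
  | zero => simp
  | succ m =>
    have := abel_nonneg (m+1) (fun i => v i - v (Fin.last m)) d
      (fun i j hij => by simpa using hv hij) (fun i => by simpa using hv (Fin.le_last i)) hd
    simp only [sub_mul, Finset.sum_sub_distrib, ← Finset.mul_sum, ht] at this
    simpa using this

lemma rado {n : ℕ} (η η' : Fin n → ℕ) (hη' : IsPartition n η') (hη : IsPartition n η)
    (hdom : Dominates η η') :
    (fun i => (η' i : ℝ)) ∈ convexHull ℝ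
      (Set.range fun π : Equiv.Perm (Fin n) => fun i => (η (π i) : ℝ)) := by
  by_contra hcon
  obtain ⟨f, u, hf, hu⟩ := geometric_hahn_banach_closed_point (convex_convexHull ℝ _)
    ((Set.finite_range _).isClosed_convexHull ℝ) hcon
  set w : Fin n → ℝ := fun i => f (Pi.single i 1) with hw
  have hfw : ∀ x, f x = ∑ i, w i * x i := by
    intro x
    have := LinearMap.pi_apply_eq_sum_univ (f : (Fin n → ℝ) →ₗ[ℝ] ℝ) x
    simp only [ContinuousLinearMap.coe_coe, smul_eq_mul] at this
    rw [this]
    refine Finset.sum_congr rfl fun i _ => ?_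
    rw [mul_comm, hw]
    congr 3
    ext j
    simp [Pi.single_apply, eq_comm]
  set π := Tuple.sort (fun i => - w i) with hπ
  have hanti : Antitone (w ∘ π) := by
    have := Tuple.monotone_sort (fun i => - w i)
    intro i j hij
    have := this hij
    simp only [Function.comp] at this ⊢
    linarith
  have hanti' : Antitone (fun i => (η' i : ℝ)) := fun i j hij =>
    Nat.cast_le.2 (hη'.1 hij)
  have h1 : ∑ i, w i * (η' i : ℝ) ≤ ∑ i, w (π i) * (η' i : ℝ) := by
    rw [← Equiv.sum_comp π]
    exact (hanti.monovary hanti').sum_mul_comp_perm_le_sum_mul (σ := π)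
  have h2 : 0 ≤ ∑ i, (w ∘ π) i * ((η i : ℝ) - η' i) := by
    apply abel_zero _ _ _ hanti
    · intro j
      rw [Finset.sum_sub_distrib, sub_nonneg]
      exact_mod_cast hdom j
    · rw [Finset.sum_sub_distrib, sub_eq_zero]
      exact_mod_cast hη.2.trans hη'.2.symm
  have h3 := hf _ (subset_convexHull ℝ _ ⟨π⁻¹, rfl⟩)
  rw [hfw] at h3 hu
  rw [← Equiv.sum_comp π] at h3
  have hπi : ∀ x, π⁻¹ (π x) = x := fun x => by simp
  simp only [hπi, Function.comp, mul_sub, Finset.sum_sub_distrib] at h3 h2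
  linarith

lemma muirhead {n : ℕ} (η η' : Fin n → ℕ) (hη' : IsPartition n η') (hη : IsPartition n η)
    (hdom : Dominates η η') :
    ∃ t : Equiv.Perm (Fin n) → ℝ, (∀ π, 0 ≤ t π) ∧ ∑ π, t π = 1 ∧
      ∀ x : Fin n → ℝ, (∀ i, 0 ≤ x i) →
        ∏ i, x i ^ η' i ≤ ∑ π, t π * ∏ i, x i ^ η (π i) := by
  have h := rado η η' hη' hη hdom
  rw [convexHull_range_eq_exists_affineCombination] at h
  obtain ⟨s, w, h0, h1, h2⟩ := h
  classical
  refine ⟨fun π => if π ∈ s then w π else 0, ?_, ?_, ?_⟩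
  · intro π
    dsimp only
    split_ifs with h
    · exact h0 π h
    · exact le_rfl
  · simpa using h1
  · intro x hx
    rw [Finset.affineCombination_eq_linear_combination _ _ _ h1] at h2
    have h3 : ∀ i, (η' i : ℝ) = ∑ π ∈ s, w π * (η (π i) : ℝ) := by
      intro i
      have := congrFun h2 i
      simpa using this.symm
    have h4 : ∏ i, x i ^ η' i = ∏ π ∈ s, (∏ i, x i ^ η (π i)) ^ w π := by
      simp_rw [← Real.finsetProd_rpow _ _ (fun i _ => pow_nonneg (hx i) _)]
      rw [Finset.prod_comm]
      refine Finset.prod_congr rfl fun i _ => ?_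
      rw [← Real.rpow_natCast, h3, Real.rpow_sum_of_nonneg (hx i)
        (fun π hπ => mul_nonneg (h0 π hπ) (Nat.cast_nonneg _))]
      refine Finset.prod_congr rfl fun π _ => ?_
      rw [mul_comm, Real.rpow_mul (hx i), Real.rpow_natCast]
    rw [h4]
    refine (Real.geom_mean_le_arith_mean_weighted s w _ h0 h1
      (fun π _ => Finset.prod_nonneg fun i _ => pow_nonneg (hx i) _)).trans_eq ?_
    simp [ite_mul]

section integrals
variable {n : ℕ} (μ : Measure (Matrix.unitaryGroup (Fin n) ℂ))
    [μ.IsMulLeftInvariant] [IsProbabilityMeasure μ] (A : Matrix (Fin n) (Fin n) ℂ)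

lemma conjU_mul (V u : Matrix.unitaryGroup (Fin n) ℂ) :
    conjU A (V * u) = (V : Matrix (Fin n) (Fin n) ℂ) * conjU A u * star (V : Matrix (Fin n) (Fin n) ℂ) := by
  simp [conjU, Matrix.mul_assoc]

lemma int_inv {E : Type*} [NormedAddCommGroup E] [NormedSpace ℝ E]
    (F : Matrix (Fin n) (Fin n) ℂ → E) (V : Matrix.unitaryGroup (Fin n) ℂ) :
    ∫ u, F ((V : Matrix (Fin n) (Fin n) ℂ) * conjU A u * star (V : Matrix (Fin n) (Fin n) ℂ)) ∂μ =
      ∫ u, F (conjU A u) ∂μ := by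
  simp_rw [← conjU_mul]
  exact integral_mul_left_eq_self (fun u => F (conjU A u)) V

lemma continuous_conjU (i j : Fin n) : Continuous fun u => conjU A u i j := by
  have : Continuous fun u : Matrix.unitaryGroup (Fin n) ℂ => conjU A u := by
    unfold conjU
    exact (continuous_subtype_val.mul continuous_const).mul continuous_subtype_val.star
  exact (continuous_apply_apply i j).comp this

lemma bound_conjU (u : Matrix.unitaryGroup (Fin n) ℂ) (i j : Fin n) :
    ‖conjU A u i j‖ ≤ ∑ l, ∑ k, ‖A k l‖ := by
  unfold conjU
  rw [Matrix.mul_apply]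
  refine (norm_sum_le _ _).trans (Finset.sum_le_sum fun l _ => ?_)
  rw [norm_mul, Matrix.mul_apply]
  have h1 : ∀ a b, ‖(u : Matrix (Fin n) (Fin n) ℂ) a b‖ ≤ 1 := 
    fun a b => entry_norm_bound_of_unitary u.2 a b
  have h2 : ‖star (u : Matrix (Fin n) (Fin n) ℂ) l j‖ ≤ 1 := by
    rw [Matrix.star_apply, norm_star]; exact h1 _ _
  refine (mul_le_of_le_one_right (norm_nonneg _) h2).trans ?_
  refine (norm_sum_le _ _).trans (Finset.sum_le_sum fun k _ => ?_)
  rw [norm_mul]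
  exact mul_le_of_le_one_left (norm_nonneg _) (h1 _ _)

lemma integrable_prod {ι : Type*} (s : Finset ι) (f g : ι → Fin n) :
    Integrable (fun u => ∏ a ∈ s, conjU A u (f a) (g a)) μ := by
  refine Integrable.of_bound (C := (∑ l, ∑ k, ‖A k l‖) ^ s.card) 
    (Continuous.aestronglyMeasurable (continuous_finsetProd _ fun a _ => continuous_conjU A _ _)) ?_
  refine Filter.Eventually.of_forall fun u => ?_
  rw [norm_prod]
  refine (Finset.prod_le_prod (fun _ _ => norm_nonneg _) fun a _ => bound_conjU A u (f a) (g a)).trans_eq ?_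
  simp

/-- moments -/
noncomputable def mom (f g : Fin n → Fin n) : ℂ := ∫ u, ∏ a, conjU A u (f a) (g a) ∂μ

lemma mom_eq_zero (f g : Fin n → Fin n) (h : cont f ≠ cont g) : mom μ A f g = 0 := by
  obtain ⟨j, hj⟩ := Function.ne_iff.1 h
  set z : ℂ := Complex.exp (2 * Real.pi * Complex.I / ((n + 1 : ℕ) : ℂ)) with hz
  have hprim : IsPrimitiveRoot z (n + 1) := Complex.isPrimitiveRoot_exp (n+1) (by omega)
  have hnorm : ‖z‖ = 1 := hprim.norm'_eq_one (by omega)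
  have hzz : z * star z = 1 := by
    rw [Complex.star_def, Complex.mul_conj, Complex.normSq_eq_norm_sq, hnorm]; simp
  have hle : ∀ f : Fin n → Fin n, cont f j < n + 1 := fun f => by
    have := Finset.card_filter_le (Finset.univ : Finset (Fin n)) (fun i => f i = j)
    simp only [Finset.card_univ, Fintype.card_fin] at this
    unfold cont; omega
  set d : Fin n → ℂ := fun i => if i = j then z else 1 with hd
  have hdd : ∀ i, d i * star (d i) = 1 := by
    intro i; simp only [hd]; split_ifs
    · exact hzz
    · simp
  let V : Matrix.unitaryGroup (Fin n) ℂ := ⟨Matrix.diagonal d, by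
    rw [Matrix.mem_unitaryGroup_iff, Matrix.star_eq_conjTranspose, Matrix.diagonal_conjTranspose,
      Matrix.diagonal_mul_diagonal]
    simp only [Pi.star_apply, hdd, Matrix.diagonal_one]⟩
  have h1 := int_inv μ A (fun M => ∏ a, M (f a) (g a)) V
  have h2 : ∀ M : Matrix (Fin n) (Fin n) ℂ, ∏ a, ((V : Matrix (Fin n) (Fin n) ℂ) * M *
      star (V : Matrix (Fin n) (Fin n) ℂ)) (f a) (g a) =
      (z ^ cont f j * star z ^ cont g j) * ∏ a, M (f a) (g a) := by
    intro M
    have e1 : ∏ a, d (f a) = z ^ cont f j := by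
      rw [prod_comp_cont, Finset.prod_eq_single j] <;> simp +contextual [hd]
    have e2 : ∏ a, star (d (g a)) = star z ^ cont g j := by
      rw [prod_comp_cont g (fun i => star (d i)), Finset.prod_eq_single j] <;> simp +contextual [hd]
    rw [← e1, ← e2, ← Finset.prod_mul_distrib, ← Finset.prod_mul_distrib]
    refine Finset.prod_congr rfl fun a _ => ?_
    simp only [V, Matrix.star_eq_conjTranspose, Matrix.diagonal_conjTranspose,
      Matrix.mul_diagonal, Matrix.diagonal_mul, Pi.star_apply]
    ring
  simp only [h2] at h1
  rw [integral_const_mul] at h1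
  change _ * mom μ A f g = mom μ A f g at h1
  by_contra hne
  have h3 : z ^ cont f j * star z ^ cont g j = 1 := mul_right_cancel₀ hne (by rw [h1, one_mul])
  have h4 : z ^ cont f j = z ^ cont g j := by
    calc z ^ cont f j = z ^ cont f j * (z * star z) ^ cont g j := by rw [hzz]; simp
      _ = (z ^ cont f j * star z ^ cont g j) * z ^ cont g j := by rw [mul_pow]; ring
      _ = _ := by rw [h3, one_mul]
  exact hj (hprim.pow_inj (hle f) (hle g) h4)

lemma exists_V (f : Fin n → Fin n) : ∃ (V : Matrix.unitaryGroup (Fin n) ℂ) (d : Fin n → ℂ),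
    ∀ j a, d j * (V : Matrix (Fin n) (Fin n) ℂ) j a = if f a = j then 1 else 0 := by
  classical
  let v : Fin n → EuclideanSpace ℂ (Fin n) := fun j =>
    WithLp.toLp 2 fun a => if f a = j then (((Real.sqrt (cont f j))⁻¹ : ℝ) : ℂ) else 0
  let s : Set (Fin n) := {j | cont f j ≠ 0}
  have hv : Orthonormal ℂ (s.domRestrict v) := by
    rw [orthonormal_iff_ite]
    rintro ⟨i, hi⟩ ⟨j, hj⟩
    simp only [Set.domRestrict_apply, v, PiLp.inner_apply, Subtype.mk.injEq]
    split_ifs with hij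
    · subst hij
      have hpos : (0:ℝ) < cont f i := by exact_mod_cast Nat.pos_of_ne_zero hi
      have : ∀ a, inner ℂ (if f a = i then (((Real.sqrt (cont f i))⁻¹ : ℝ) : ℂ) else 0)
        (if f a = i then (((Real.sqrt (cont f i))⁻¹ : ℝ) : ℂ) else 0) = 
          if f a = i then (((cont f i : ℝ)⁻¹ : ℝ) : ℂ) else 0 := by
        intro a
        split_ifs
        · rw [RCLike.inner_apply, Complex.conj_ofReal, ← Complex.ofReal_mul, ← mul_inv,
            Real.mul_self_sqrt hpos.le]
        · simp
      simp only [this]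
      rw [← Finset.sum_filter, Finset.sum_const, nsmul_eq_mul]
      change (cont f i : ℂ) * _ = 1
      have : (cont f i : ℂ) ≠ 0 := by exact_mod_cast hi
      push_cast
      exact mul_inv_cancel₀ this
    · refine Finset.sum_eq_zero fun a _ => ?_
      by_cases h : f a = i
      · have : f a ≠ j := fun hb => hij (h.symm.trans hb)
        simp [this]
      · simp [h]
  obtain ⟨b, hb⟩ := hv.exists_orthonormalBasis_extension_of_card_eq (by simp)
  refine ⟨⟨Matrix.of fun j a => b j a, ?_⟩, fun j => ((Real.sqrt (cont f j) : ℝ) : ℂ), ?_⟩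
  · rw [Matrix.mem_unitaryGroup_iff]
    ext i j
    have := orthonormal_iff_ite.1 b.orthonormal j i
    rw [PiLp.inner_apply] at this
    simp only [RCLike.inner_apply] at this
    rw [Matrix.mul_apply, Matrix.one_apply]
    simp only [Matrix.star_apply, Matrix.of_apply]
    simpa [eq_comm] using this
  · intro j a
    by_cases hj : cont f j = 0
    · have : f a ≠ j := by
        intro h
        unfold cont at hj
        rw [Finset.card_eq_zero, Finset.filter_eq_empty_iff] at hj
        exact hj (Finset.mem_univ a) h
      simp [hj, this]
    · have hpos : (0:ℝ) < cont f j := by exact_mod_cast Nat.pos_of_ne_zero hj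
      have hs : ((Real.sqrt (cont f j) : ℝ) : ℂ) ≠ 0 := by
        exact_mod_cast (Real.sqrt_pos.2 hpos).ne'
      simp only [Matrix.of_apply, hb j hj, v]
      split_ifs
      · rw [Complex.ofReal_inv, mul_inv_cancel₀ hs]
      · simp

lemma cont_id : cont (id : Fin n → Fin n) = fun _ => 1 := by
  ext j; simp [cont, Finset.filter_eq']

lemma bij_of_cont (g : Fin n → Fin n) (h : cont g = cont id) : Function.Bijective g := by
  refine Finite.surjective_iff_bijective.1 fun j => ?_
  have := congrFun h j
  rw [cont_id] at this
  unfold cont at this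
  have h2 : (Finset.univ.filter fun i => g i = j).Nonempty := Finset.card_pos.1 (this ▸ Nat.one_pos)
  obtain ⟨i, hi⟩ := h2
  exact ⟨i, (Finset.mem_filter.1 hi).2⟩

lemma mom_diag (f : Fin n → Fin n) :
    mom μ A f f = ∑ σ : Equiv.Perm (Fin n), if f ∘ σ = f then mom μ A id σ else 0 := by
  classical
  obtain ⟨V, d, hV⟩ := exists_V f
  obtain ⟨W, hW⟩ : ∃ W : Matrix (Fin n) (Fin n) ℂ, W = (V : Matrix (Fin n) (Fin n) ℂ) := ⟨_, rfl⟩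
  rw [← hW] at hV
  have hWW : star W * W = 1 := by
    rw [hW]; exact Matrix.mem_unitaryGroup_iff'.1 V.2
  have s1 : mom μ A f f = ∑ h : Fin n → Fin n, mom μ A f h * ∏ a, (d (h a) * W (h a) a) := by
    rw [Finset.sum_eq_single f]
    · simp [hV]
    · intro h _ hne
      obtain ⟨a, ha⟩ := Function.ne_iff.1 hne
      rw [Finset.prod_eq_zero (Finset.mem_univ a), mul_zero]
      simp [hV, ha.symm]
    · simp
  have s2 : ∀ h : Fin n → Fin n, mom μ A f h * ∏ a, (d (h a) * W (h a) a) =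
      (∏ a, d (f a)) * (mom μ A f h * ∏ a, W (h a) a) := by
    intro h
    by_cases hc : cont f = cont h
    · rw [Finset.prod_mul_distrib, prod_comp_cont h, prod_comp_cont f, hc]; ring
    · rw [mom_eq_zero μ A f h hc]; ring
  have s3 : ∑ h : Fin n → Fin n, (mom μ A f h * ∏ a, W (h a) a) =
      ∫ u, ∏ a, (conjU A u * W) (f a) a ∂μ := by
    simp only [Matrix.mul_apply, Fintype.prod_sum, Finset.prod_mul_distrib]
    rw [integral_finsetSum _ fun h _ => (integrable_prod μ A _ f h).mul_const _]
    simp only [integral_mul_const, mom]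
  have s4 : ∫ u, ∏ a, (conjU A u * W) (f a) a ∂μ = ∫ u, ∏ a, (W * conjU A u) (f a) a ∂μ := by
    rw [← int_inv μ A (fun M => ∏ a, (M * W) (f a) a) V]
    simp only [← hW, Matrix.mul_assoc, hWW, Matrix.mul_one]
  have s5 : ∫ u, ∏ a, (W * conjU A u) (f a) a ∂μ = 
      ∑ g : Fin n → Fin n, (∏ a, W (f a) (g a)) * mom μ A g id := by
    simp only [Matrix.mul_apply, Fintype.prod_sum, Finset.prod_mul_distrib]
    rw [integral_finsetSum _ fun h _ => (integrable_prod μ A _ h fun a => a).const_mul _]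
    simp only [integral_const_mul, mom, id]
  have s6 : mom μ A f f = ∑ g : Fin n → Fin n, if f ∘ g = f then mom μ A g id else 0 := by
    rw [s1]
    simp only [s2]
    rw [← Finset.mul_sum, s3, s4, s5, Finset.mul_sum]
    refine Finset.sum_congr rfl fun g _ => ?_
    rw [← mul_assoc, ← Finset.prod_mul_distrib]
    simp only [hV]
    split_ifs with h
    · rw [Finset.prod_eq_one, one_mul]
      intro a _
      exact if_pos (congrFun h a)
    · obtain ⟨a, ha⟩ := Function.ne_iff.1 h
      rw [Finset.prod_eq_zero (Finset.mem_univ a), zero_mul]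
      exact if_neg ha
  rw [s6]
  symm
  rw [← Equiv.sum_comp (Equiv.inv (Equiv.Perm (Fin n)))]
  refine Finset.sum_of_injOn (fun σ : Equiv.Perm (Fin n) => (σ : Fin n → Fin n))
    (fun σ _ τ _ h => Equiv.coe_fn_injective h) (fun _ _ => Finset.mem_coe.2 (Finset.mem_univ _)) ?_ ?_
  · intro g _ hg
    rw [mom_eq_zero, ite_self]
    intro hc
    exact hg ⟨Equiv.ofBijective g (bij_of_cont g hc), by simp, rfl⟩
  · intro σ _
    have e1 : (f ∘ (σ⁻¹ : Equiv.Perm (Fin n)) = f) ↔ f ∘ σ = f := by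
      constructor
      · intro h
        conv_lhs => rw [← h]
        ext a; simp
      · intro h
        conv_lhs => rw [← h]
        ext a; simp
    have e2 : mom μ A id (σ⁻¹ : Equiv.Perm (Fin n)) = mom μ A σ id := by
      unfold mom
      congr 1
      ext u
      rw [← Equiv.prod_comp σ]
      simp
    simp only [Equiv.inv_apply, e1, e2]

/-- diagonal moments -/
noncomputable def diagMom (η : Fin n → ℕ) : ℂ := ∫ u, ∏ j, conjU A u j j ^ η j ∂μ

lemma int_dInduced (η : Fin n → ℕ) (h : ∑ i, η i = n) :
    ∫ u, dInduced η (conjU A u) ∂μ = (Nat.multinomial Finset.univ η : ℂ) * diagMom μ A η := by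
  classical
  have hchar : ∀ σ, inducedChar n η σ =
      ∑ f : Fin n → Fin n with cont f = η, if f ∘ σ = f then 1 else 0 := by
    intro σ
    unfold inducedChar
    rw [Nat.card_eq_fintype_card, Fintype.card_subtype, Finset.sum_boole, Finset.filter_filter]
    simp only [nat_card_eq_cont, funext_iff, Nat.cast_id]
  unfold dInduced
  rw [integral_finsetSum _ fun σ _ => (integrable_prod μ A _ _ _).const_mul _]
  simp only [integral_const_mul]
  change ∑ σ : Equiv.Perm (Fin n), (inducedChar n η σ : ℂ) * mom μ A id σ = _
  simp only [hchar]
  push_cast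
  simp only [Finset.sum_mul]
  rw [Finset.sum_comm, ← card_cont η h, ← nsmul_eq_mul, ← Finset.sum_const]
  refine Finset.sum_congr rfl fun f hf => ?_
  have := mom_diag μ A f
  simp only [ite_mul, one_mul, zero_mul]
  rw [← this]
  unfold mom diagMom
  congr 1
  ext u
  rw [prod_comp_cont f (fun j => conjU A u j j), (Finset.mem_filter.1 hf).2]

lemma perm_sym (F : (Fin n → ℝ) → ℝ) (π : Equiv.Perm (Fin n)) :
    ∫ u, F (fun i => (conjU A u (π i) (π i)).re) ∂μ = ∫ u, F (fun i => (conjU A u i i).re) ∂μ := by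
  let V : Matrix.unitaryGroup (Fin n) ℂ := ⟨π.permMatrix ℂ, by
    rw [Matrix.mem_unitaryGroup_iff, Matrix.star_eq_conjTranspose, Matrix.conjTranspose_permMatrix,
      ← Matrix.permMatrix_mul]
    simp⟩
  have := int_inv μ A (fun M => F (fun i => (M i i).re)) V
  rw [← this]
  congr 1
  ext u
  congr 1
  ext i
  simp only [V, Matrix.star_eq_conjTranspose, Matrix.conjTranspose_permMatrix]
  rw [Equiv.Perm.permMatrix, Equiv.Perm.permMatrix, PEquiv.toMatrix_toPEquiv_mul, PEquiv.mul_toMatrix_toPEquiv]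
  simp only [Matrix.submatrix_apply, id]
  rfl

end integrals

theorem stmt0 (n : ℕ) (hn : 1 ≤ n)
    (μ : Measure (Matrix.unitaryGroup (Fin n) ℂ))
    [μ.IsMulLeftInvariant] [IsProbabilityMeasure μ]
    (A : Matrix (Fin n) (Fin n) ℂ) (hA : A.PosSemidef)
    (η η' : Fin n → ℕ) (hη : IsPartition n η) (hη' : IsPartition n η')
    (hdom : Dominates η η') :
    ((Nat.multinomial Finset.univ η' : ℝ))⁻¹ * (∫ u, dInduced η' (conjU A u) ∂μ).re ≤
      ((Nat.multinomial Finset.univ η : ℝ))⁻¹ * (∫ u, dInduced η (conjU A u) ∂μ).re := by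
  have hpsd : ∀ u i, 0 ≤ conjU A u i i := fun u i =>
    (hA.mul_mul_conjTranspose_same (u : Matrix (Fin n) (Fin n) ℂ)).diag_nonneg
  have hre : ∀ u i, conjU A u i i = ((conjU A u i i).re : ℂ) := fun u i =>
    Complex.ext (by simp) (by simp [← (Complex.nonneg_iff.1 (hpsd u i)).2])
  have hx : ∀ u i, 0 ≤ (conjU A u i i).re := fun u i => (Complex.nonneg_iff.1 (hpsd u i)).1
  have hmom : ∀ ζ : Fin n → ℕ, diagMom μ A ζ =
      ((∫ u, ∏ j, (conjU A u j j).re ^ ζ j ∂μ : ℝ) : ℂ) := by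
    intro ζ
    unfold diagMom
    rw [← integral_complex_ofReal]
    congr 1
    ext u
    push_cast
    exact Finset.prod_congr rfl fun j _ => by rw [← hre]
  have hint : ∀ ζ : Fin n → ℕ, Integrable (fun u => ∏ j, (conjU A u j j).re ^ ζ j) μ := by
    intro ζ
    have h1 := (integrable_prod μ A (Finset.univ : Finset ((j : Fin n) × Fin (ζ j)))
      (fun p => p.1) (fun p => p.1)).re
    refine h1.congr (Filter.Eventually.of_forall fun u => ?_)
    have : ∏ p : (j : Fin n) × Fin (ζ j), conjU A u p.1 p.1 =
        ((∏ j, (conjU A u j j).re ^ ζ j : ℝ) : ℂ) := by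
      rw [Fintype.prod_sigma]
      push_cast
      refine Finset.prod_congr rfl fun j _ => ?_
      rw [← hre]; simp
    change (∏ p : (j : Fin n) × Fin (ζ j), conjU A u p.1 p.1).re = _
    rw [this, Complex.ofReal_re]
  have hval : ∀ ζ : Fin n → ℕ, ∑ i, ζ i = n →
      ((Nat.multinomial Finset.univ ζ : ℝ))⁻¹ * (∫ u, dInduced ζ (conjU A u) ∂μ).re =
      ∫ u, ∏ j, (conjU A u j j).re ^ ζ j ∂μ := by
    intro ζ hζ
    rw [int_dInduced μ A ζ hζ, hmom, ← Complex.ofReal_natCast, ← Complex.ofReal_mul,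
      Complex.ofReal_re, ← mul_assoc, inv_mul_cancel₀, one_mul]
    exact_mod_cast (Nat.multinomial_pos _ _).ne'
  rw [hval η hη.2, hval η' hη'.2]
  obtain ⟨t, ht0, ht1, ht⟩ := muirhead η η' hη' hη hdom
  have hsym : ∀ π : Equiv.Perm (Fin n), ∫ u, ∏ i, (conjU A u i i).re ^ η (π i) ∂μ =
      ∫ u, ∏ i, (conjU A u i i).re ^ η i ∂μ := by
    intro π
    rw [← perm_sym μ A (fun x => ∏ i, x i ^ η i) π⁻¹]
    congr 1
    ext u
    rw [← Equiv.prod_comp π⁻¹]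
    simp
  calc ∫ u, ∏ j, (conjU A u j j).re ^ η' j ∂μ
      ≤ ∫ u, ∑ π, t π * ∏ i, (conjU A u i i).re ^ η (π i) ∂μ := by
        refine integral_mono (hint η') (integrable_finsetSum _ fun π _ =>
          (hint fun i => η (π i)).const_mul _) fun u => ht _ (hx u)
    _ = ∑ π, t π * ∫ u, ∏ i, (conjU A u i i).re ^ η (π i) ∂μ := by
        rw [integral_finsetSum _ fun π _ => (hint fun i => η (π i)).const_mul _]
        simp only [integral_const_mul]
    _ = _ := by
        simp only [hsym]
        rw [← Finset.sum_mul, ht1, one_mul]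
end

section
/- Let n ≥ 1, let A be an n×n positive semidefinite complex matrix, and let η and η' be partitions of n with η ⊵ η' in the dominance order. Then ∫_{U(n)} ∏_{i=1}^n (Re((u A u*)_{ii}))^{η_i} du ≥ ∫_{U(n)} ∏_{i=1}^n (Re((u A u*)_{ii}))^{η'_i} du, the integrals being over the unitary group U(n) with respect to its Haar probability measure. -/
open MeasureTheory Matrix
open scoped ComplexOrder

theorem mh_compact (n : ℕ) : CompactSpace (Matrix.unitaryGroup (Fin n) ℂ) := by
  have hcl : IsClosed ((Matrix.unitaryGroup (Fin n) ℂ : Submonoid (Matrix (Fin n) (Fin n) ℂ)) :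
      Set (Matrix (Fin n) (Fin n) ℂ)) := by
    have : ((Matrix.unitaryGroup (Fin n) ℂ : Submonoid (Matrix (Fin n) (Fin n) ℂ)) :
      Set (Matrix (Fin n) (Fin n) ℂ)) = {U | U * star U = 1} := by
      ext U
      exact Matrix.mem_unitaryGroup_iff
    rw [this]
    exact isClosed_eq (by fun_prop) continuous_const
  have hK : IsCompact (Set.univ.pi fun _ : Fin n => Set.univ.pi fun _ : Fin n =>
      Metric.closedBall (0 : ℂ) 1) :=
    isCompact_univ_pi fun _ => isCompact_univ_pi fun _ => isCompact_closedBall _ _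
  refine isCompact_iff_compactSpace.mp (IsCompact.of_isClosed_subset hK hcl ?_)
  intro U hU
  intro i _ j _
  refine mem_closedBall_zero_iff.2 ?_
  exact entry_norm_bound_of_unitary hU i j

theorem mh_cont {n : ℕ} (A : Matrix (Fin n) (Fin n) ℂ) (γ : Fin n → ℕ) :
    Continuous fun u : Matrix.unitaryGroup (Fin n) ℂ => ∏ i, ((conjU A u) i i).re ^ γ i := by
  have h : Continuous fun u : Matrix.unitaryGroup (Fin n) ℂ => conjU A u := by
    unfold conjU
    fun_prop
  refine continuous_finsetProd _ fun i _ => ?_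
  exact (Complex.continuous_re.comp ((continuous_apply_apply i i).comp h)).pow _

theorem mh_integrable {n : ℕ} (μ : Measure (Matrix.unitaryGroup (Fin n) ℂ))
    [IsProbabilityMeasure μ] (A : Matrix (Fin n) (Fin n) ℂ) (γ : Fin n → ℕ) :
    Integrable (fun u => ∏ i, ((conjU A u) i i).re ^ γ i) μ := by
  have := mh_compact n
  exact (mh_cont A γ).integrable_of_hasCompactSupport (HasCompactSupport.of_compactSpace _)

theorem mh_perm_mem {n : ℕ} (σ : Equiv.Perm (Fin n)) :
    σ.permMatrix ℂ ∈ Matrix.unitaryGroup (Fin n) ℂ := by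
  rw [Matrix.mem_unitaryGroup_iff, Matrix.star_eq_conjTranspose, conjTranspose_permMatrix,
    ← permMatrix_mul]
  simp

theorem mh_symm {n : ℕ} (μ : Measure (Matrix.unitaryGroup (Fin n) ℂ))
    [μ.IsMulLeftInvariant] (A : Matrix (Fin n) (Fin n) ℂ) (γ : Fin n → ℕ)
    (σ : Equiv.Perm (Fin n)) :
    ∫ u, ∏ i, ((conjU A u) i i).re ^ γ (σ i) ∂μ = ∫ u, ∏ i, ((conjU A u) i i).re ^ γ i ∂μ := by
  rw [← integral_mul_left_eq_self (fun u => ∏ i, ((conjU A u) i i).re ^ γ (σ i))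
    (⟨σ.permMatrix ℂ, mh_perm_mem σ⟩ : Matrix.unitaryGroup (Fin n) ℂ)]
  congr 1
  ext u
  rw [← Equiv.prod_comp σ (fun i => ((conjU A u) i i).re ^ γ i)]
  refine Finset.prod_congr rfl fun i _ => ?_
  congr 2
  have : conjU A ((⟨σ.permMatrix ℂ, mh_perm_mem σ⟩ : Matrix.unitaryGroup (Fin n) ℂ) * u)
      = σ.permMatrix ℂ * conjU A u * (σ⁻¹).permMatrix ℂ := by
    simp only [conjU, Submonoid.coe_mul, star_mul, Matrix.mul_assoc]
    rw [Matrix.star_eq_conjTranspose (σ.permMatrix ℂ), conjTranspose_permMatrix]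
  rw [this, PEquiv.toMatrix_toPEquiv_mul, PEquiv.mul_toMatrix_toPEquiv]
  simp
  rfl

theorem mh_nonneg {n : ℕ} {A : Matrix (Fin n) (Fin n) ℂ} (hA : A.PosSemidef)
    (u : Matrix.unitaryGroup (Fin n) ℂ) (i : Fin n) : 0 ≤ ((conjU A u) i i).re := by
  have h : (conjU A u).PosSemidef := hA.mul_mul_conjTranspose_same _
  exact (Complex.le_def.mp (h.diag_nonneg (i := i))).1

theorem mh_two {x y : ℝ} (hx : 0 ≤ x) (hy : 0 ≤ y) (b d : ℕ) :
    x ^ (b + d) * y ^ (b + 1) + x ^ (b + 1) * y ^ (b + d) ≤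
      x ^ (b + d + 1) * y ^ b + x ^ b * y ^ (b + d + 1) := by
  have h1 : 0 ≤ (x ^ d - y ^ d) * (x - y) := by
    rcases le_total x y with h | h
    · exact mul_nonneg_of_nonpos_of_nonpos (sub_nonpos.2 (pow_le_pow_left₀ hx h d))
        (sub_nonpos.2 h)
    · exact mul_nonneg (sub_nonneg.2 (pow_le_pow_left₀ hy h d)) (sub_nonneg.2 h)
  have h2 : 0 ≤ x ^ b * y ^ b * ((x ^ d - y ^ d) * (x - y)) := by positivity
  have h3 : x ^ b * y ^ b * ((x ^ d - y ^ d) * (x - y)) =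
      (x ^ (b + d + 1) * y ^ b + x ^ b * y ^ (b + d + 1)) -
      (x ^ (b + d) * y ^ (b + 1) + x ^ (b + 1) * y ^ (b + d)) := by ring
  linarith

theorem mh_point {n : ℕ} (x : Fin n → ℝ) (hx : ∀ i, 0 ≤ x i) (α β : Fin n → ℕ) (i k : Fin n)
    (hik : i ≠ k) (hlt : α k < α i) (hi : β i + 1 = α i) (hk : β k = α k + 1)
    (ho : ∀ l, l ≠ i → l ≠ k → β l = α l) :
    ∏ l, x l ^ β l + ∏ l, x l ^ β (Equiv.swap i k l) ≤
      ∏ l, x l ^ α l + ∏ l, x l ^ α (Equiv.swap i k l) := by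
  have key : ∀ γ : Fin n → ℕ, ∏ l, x l ^ γ l =
      x i ^ γ i * (x k ^ γ k * ∏ l ∈ (Finset.univ.erase i).erase k, x l ^ γ l) := by
    intro γ
    rw [Finset.mul_prod_erase _ (fun l => x l ^ γ l) (by simp [hik.symm]),
      Finset.mul_prod_erase _ (fun l => x l ^ γ l) (by simp)]
  have hrest : ∀ γ : Fin n → ℕ, (∀ l, l ≠ i → l ≠ k → γ l = α l) →
      ∏ l ∈ (Finset.univ.erase i).erase k, x l ^ γ l =
        ∏ l ∈ (Finset.univ.erase i).erase k, x l ^ α l := by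
    intro γ h
    refine Finset.prod_congr rfl fun l hl => ?_
    simp only [Finset.mem_erase, Finset.mem_univ, and_true] at hl
    rw [h l hl.2 hl.1]
  rw [key β, key α, key fun l => β (Equiv.swap i k l), key fun l => α (Equiv.swap i k l),
    hrest β ho,
    hrest (fun l => β (Equiv.swap i k l))
      (fun l h1 h2 => by simp only [Equiv.swap_apply_of_ne_of_ne h1 h2]; exact ho l h1 h2),
    hrest (fun l => α (Equiv.swap i k l))
      (fun l h1 h2 => by simp only [Equiv.swap_apply_of_ne_of_ne h1 h2])]
  simp only [Equiv.swap_apply_left, Equiv.swap_apply_right]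
  obtain ⟨d, hd⟩ : ∃ d, α i = α k + d + 1 := ⟨α i - α k - 1, by omega⟩
  have hb : β i = α k + d := by omega
  rw [hk, hb, hd]
  have hP : 0 ≤ ∏ l ∈ (Finset.univ.erase i).erase k, x l ^ α l :=
    Finset.prod_nonneg fun l _ => pow_nonneg (hx l) _
  have := mul_le_mul_of_nonneg_right (mh_two (hx i) (hx k) (α k) d) hP
  linarith

theorem mh_chain {n : ℕ} (F : (Fin n → ℕ) → ℝ)
    (hF : ∀ (α β : Fin n → ℕ) (i k : Fin n), i ≠ k → α k < α i → β i + 1 = α i →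
      β k = α k + 1 → (∀ l, l ≠ i → l ≠ k → β l = α l) → F β ≤ F α)
    (β : Fin n → ℕ) (hβ : Antitone β) (N : ℕ) :
    ∀ α : Fin n → ℕ, ∑ l, (α l - β l) = N → ∑ l, α l = ∑ l, β l → Dominates α β →
      F β ≤ F α := by
  induction N using Nat.strong_induction_on with
  | _ N ih =>
  intro α hN hsum hdom
  by_cases hex : ∃ k, α k < β k
  swap
  · push Not at hex
    have := (Finset.sum_eq_sum_iff_of_le (s := Finset.univ) (fun l _ => hex l)).1 hsum.symm
    have : β = α := funext fun l => this l (Finset.mem_univ l)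
    rw [this]
  obtain ⟨k, hk, hmin⟩ : ∃ k, α k < β k ∧ ∀ l, l < k → β l ≤ α l := by
    classical
    obtain ⟨k, hk, hm⟩ := WellFounded.has_min (wellFounded_lt (α := Fin n)) {k | α k < β k} hex
    exact ⟨k, hk, fun l hl => by
      by_contra h
      exact hm l (not_le.1 h) hl⟩
  obtain ⟨i, hik, hi⟩ : ∃ i, i < k ∧ β i < α i := by
    by_contra hcon
    push Not at hcon
    have : ∑ l ∈ Finset.Iic k, α l < ∑ l ∈ Finset.Iic k, β l := by
      refine Finset.sum_lt_sum (fun l hl => ?_) ⟨k, by simp, hk⟩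
      rcases (Finset.mem_Iic.1 hl).lt_or_eq with h | h
      · exact hcon l h
      · rw [h]; exact hk.le
    exact absurd (hdom k) (not_le.2 this)
  have hβik := hβ hik.le
  set α' : Fin n → ℕ := Function.update (Function.update α i (α i - 1)) k (α k + 1) with hα'
  have e1 : α' i + 1 = α i := by
    simp [hα', hik.ne]; omega
  have e2 : α' k = α k + 1 := by simp [hα']
  have e3 : ∀ l, l ≠ i → l ≠ k → α' l = α l := fun l h1 h2 => by simp [hα', h1, h2]
  have hpt : ∀ l, α' l + (if l = i then 1 else 0) = α l + (if l = k then 1 else 0) := by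
    intro l
    by_cases h1 : l = i
    · subst h1; simp [hik.ne, e1]
    · by_cases h2 : l = k
      · subst h2; simp [h1, e2]
      · simp [h1, h2, e3 l h1 h2]
  have hs : ∀ s : Finset (Fin n), ∑ l ∈ s, α' l + (if i ∈ s then 1 else 0) =
      ∑ l ∈ s, α l + (if k ∈ s then 1 else 0) := by
    intro s
    have := Finset.sum_congr (rfl : s = s) (fun l _ => hpt l)
    simpa [Finset.sum_add_distrib] using this
  refine le_trans (ih (∑ l, (α' l - β l)) ?_ α' rfl ?_ ?_)
    (hF α α' i k hik.ne (by omega) e1 e2 e3)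
  · rw [← hN]
    refine Finset.sum_lt_sum (fun l _ => ?_) ⟨i, Finset.mem_univ _, by omega⟩
    by_cases h1 : l = i
    · subst h1; omega
    · by_cases h2 : l = k
      · subst h2; omega
      · rw [e3 l h1 h2]
  · have := hs Finset.univ
    simp at this
    omega
  · intro j
    have h := hs (Finset.Iic j)
    have hd := hdom j
    simp only [Finset.mem_Iic] at h
    by_cases hkj : k ≤ j
    · rw [if_pos hkj, if_pos (hik.le.trans hkj)] at h
      omega
    · rw [if_neg hkj] at h
      by_cases hij : i ≤ j
      · rw [if_pos hij] at h
        have : ∑ l ∈ Finset.Iic j, β l < ∑ l ∈ Finset.Iic j, α l :=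
          Finset.sum_lt_sum (fun l hl => hmin l ((Finset.mem_Iic.1 hl).trans_lt (not_le.1 hkj)))
            ⟨i, Finset.mem_Iic.2 hij, hi⟩
        omega
      · rw [if_neg hij] at h
        omega

theorem stmt1 (n : ℕ) (hn : 1 ≤ n)
    (μ : Measure (Matrix.unitaryGroup (Fin n) ℂ))
    [μ.IsMulLeftInvariant] [IsProbabilityMeasure μ]
    (A : Matrix (Fin n) (Fin n) ℂ) (hA : A.PosSemidef)
    (η η' : Fin n → ℕ) (hη : IsPartition n η) (hη' : IsPartition n η')
    (hdom : Dominates η η') :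
    ∫ u, ∏ i, ((conjU A u) i i).re ^ η' i ∂μ ≤
      ∫ u, ∏ i, ((conjU A u) i i).re ^ η i ∂μ := by
  refine mh_chain (fun γ => ∫ u, ∏ i, ((conjU A u) i i).re ^ γ i ∂μ) ?_ η' hη'.1 _ η rfl
    (hη.2.trans hη'.2.symm) hdom
  intro α β i k hik hlt hi hk ho
  have hle : ∫ u, (∏ l, ((conjU A u) l l).re ^ β l +
        ∏ l, ((conjU A u) l l).re ^ β (Equiv.swap i k l)) ∂μ ≤
      ∫ u, (∏ l, ((conjU A u) l l).re ^ α l +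
        ∏ l, ((conjU A u) l l).re ^ α (Equiv.swap i k l)) ∂μ := by
    refine integral_mono
      ((mh_integrable μ A β).add (mh_integrable μ A fun l => β (Equiv.swap i k l)))
      ((mh_integrable μ A α).add (mh_integrable μ A fun l => α (Equiv.swap i k l)))
      fun u => ?_
    exact mh_point (fun l => ((conjU A u) l l).re) (mh_nonneg hA u) α β i k hik hlt hi hk ho
  rw [integral_add (mh_integrable μ A β) (mh_integrable μ A fun l => β (Equiv.swap i k l)),
    integral_add (mh_integrable μ A α) (mh_integrable μ A fun l => α (Equiv.swap i k l)),
    mh_symm, mh_symm] at hle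
  show ∫ u, ∏ i, ((conjU A u) i i).re ^ β i ∂μ ≤ ∫ u, ∏ i, ((conjU A u) i i).re ^ α i ∂μ
  linarith
end

section
/- Let n ≥ 1, let A be an n×n complex matrix, and let γ be a partition of n. Then ∫_{U(n)} d_{[γ]}(u A u*) du = (n choose γ) · ∫_{U(n)} ∏_{i=1}^n ((u A u*)_{ii})^{γ_i} du, where the integrals are over the unitary group U(n) with respect to its Haar probability measure. (Formula (22).) -/
open MeasureTheory Matrix
open scoped ComplexOrder

/-- tensor power of a matrix, as a matrix indexed by functions -/
def tensorPow {n : ℕ} (X : Matrix (Fin n) (Fin n) ℂ) :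
    Matrix (Fin n → Fin n) (Fin n → Fin n) ℂ :=
  Matrix.of fun g h => ∏ i, X (g i) (h i)

lemma tensorPow_mul {n : ℕ} (X Y : Matrix (Fin n) (Fin n) ℂ) :
    tensorPow (X * Y) = tensorPow X * tensorPow Y := by
  ext g h
  simp only [tensorPow, Matrix.of_apply, Matrix.mul_apply]
  rw [Finset.prod_univ_sum]
  simp [Finset.prod_mul_distrib]

lemma tensorPow_one {n : ℕ} : tensorPow (1 : Matrix (Fin n) (Fin n) ℂ) = 1 := by
  ext g h
  simp only [tensorPow, Matrix.of_apply, Matrix.one_apply]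
  rw [Finset.prod_ite_zero]
  simp [funext_iff]

lemma tensorPow_diagonal {n : ℕ} (d : Fin n → ℂ) :
    tensorPow (Matrix.diagonal d) = Matrix.diagonal (fun g => ∏ i, d (g i)) := by
  ext g h
  simp only [tensorPow, Matrix.of_apply, Matrix.diagonal_apply]
  rw [Finset.prod_ite_zero]
  simp [funext_iff]

lemma entry_zero_of_count_ne {n : ℕ} (T : Matrix (Fin n → Fin n) (Fin n → Fin n) ℂ)
    (hT : ∀ v : Matrix.unitaryGroup (Fin n) ℂ,
      Commute T (tensorPow (v : Matrix (Fin n) (Fin n) ℂ)))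
    (g h : Fin n → Fin n) (k : Fin n)
    (hk : (Finset.univ.filter (fun i => g i = k)).card ≠
      (Finset.univ.filter (fun i => h i = k)).card) : T g h = 0 := by
  have hz : IsPrimitiveRoot (Complex.exp (2 * Real.pi * Complex.I / ((n + 1 : ℕ) : ℂ))) (n + 1) :=
    Complex.isPrimitiveRoot_exp (n + 1) (Nat.succ_ne_zero n)
  set z := Complex.exp (2 * Real.pi * Complex.I / ((n + 1 : ℕ) : ℂ)) with hzdef
  have hnorm : ‖z‖ = 1 := hz.norm'_eq_one (Nat.succ_ne_zero n)
  have hzz : z * star z = 1 := by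
    have := Complex.mul_conj z
    rw [Complex.normSq_eq_norm_sq, hnorm] at this
    simpa using this
  let d : Fin n → ℂ := fun j => if j = k then z else 1
  have hd : Matrix.diagonal d ∈ Matrix.unitaryGroup (Fin n) ℂ := by
    rw [Matrix.mem_unitaryGroup_iff, Matrix.star_eq_conjTranspose, Matrix.diagonal_conjTranspose,
      Matrix.diagonal_mul_diagonal, ← Matrix.diagonal_one]
    congr 1
    ext j
    by_cases hj : j = k
    · simpa [d, hj] using hzz
    · simp [d, hj]
  have hc := hT ⟨_, hd⟩
  simp only [tensorPow_diagonal] at hc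
  have hc' := congrFun (congrFun hc.eq g) h
  rw [Matrix.mul_diagonal, Matrix.diagonal_mul] at hc'
  have hp : ∀ f : Fin n → Fin n, ∏ i, d (f i) =
      z ^ (Finset.univ.filter (fun i => f i = k)).card := by
    intro f
    simp [d, Finset.prod_ite]
  rw [hp, hp, mul_comm] at hc'
  by_contra hne
  have := mul_right_cancel₀ hne hc'
  have hle : ∀ f : Fin n → Fin n, (Finset.univ.filter (fun i => f i = k)).card < n + 1 := by
    intro f
    have := Finset.card_filter_le (Finset.univ : Finset (Fin n)) (fun i => f i = k)
    simp at this
    omega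
  exact hk (hz.pow_inj (hle _) (hle _) this.symm)

lemma commute_diagonal {n : ℕ} (T : Matrix (Fin n → Fin n) (Fin n → Fin n) ℂ)
    (hT : ∀ v : Matrix.unitaryGroup (Fin n) ℂ,
      Commute T (tensorPow (v : Matrix (Fin n) (Fin n) ℂ))) (d : Fin n → ℂ) :
    Commute T (tensorPow (Matrix.diagonal d)) := by
  rw [tensorPow_diagonal]
  ext g h
  rw [Matrix.mul_diagonal, Matrix.diagonal_mul]
  by_cases hc : ∀ k, (Finset.univ.filter (fun i => g i = k)).card =
      (Finset.univ.filter (fun i => h i = k)).card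
  · rw [mul_comm]
    congr 1
    rw [Finset.prod_comp d g, Finset.prod_comp d h]
    rw [Finset.prod_subset (Finset.subset_univ (Finset.univ.image g)),
      Finset.prod_subset (Finset.subset_univ (Finset.univ.image h))]
    · exact Finset.prod_congr rfl fun k _ => by rw [hc k]
    · intro x _ hx
      rw [Finset.card_eq_zero.mpr, pow_zero]
      simpa [Finset.filter_eq_empty_iff] using hx
    · intro x _ hx
      rw [Finset.card_eq_zero.mpr, pow_zero]
      simpa [Finset.filter_eq_empty_iff] using hx
  · push Not at hc
    obtain ⟨k, hk⟩ := hc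
    rw [entry_zero_of_count_ne T hT g h k hk]
    simp

lemma commute_hermitian {n : ℕ} (T : Matrix (Fin n → Fin n) (Fin n → Fin n) ℂ)
    (hT : ∀ v : Matrix.unitaryGroup (Fin n) ℂ,
      Commute T (tensorPow (v : Matrix (Fin n) (Fin n) ℂ)))
    (H : Matrix (Fin n) (Fin n) ℂ) (hH : H.IsHermitian) :
    Commute T (tensorPow H) := by
  rw [hH.spectral_theorem, Unitary.conjStarAlgAut_apply, tensorPow_mul, tensorPow_mul]
  refine ((hT _).mul_right (commute_diagonal T hT _)).mul_right ?_
  exact hT (star hH.eigenvectorUnitary)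

lemma commute_all {n : ℕ} (T : Matrix (Fin n → Fin n) (Fin n → Fin n) ℂ)
    (hT : ∀ v : Matrix.unitaryGroup (Fin n) ℂ,
      Commute T (tensorPow (v : Matrix (Fin n) (Fin n) ℂ)))
    (X : Matrix (Fin n) (Fin n) ℂ) :
    Commute T (tensorPow X) := by
  obtain ⟨H, K, hH, hK, rfl⟩ : ∃ H K : Matrix (Fin n) (Fin n) ℂ, H.IsHermitian ∧ K.IsHermitian ∧
      X = H + Complex.I • K :=
    ⟨(realPart X : Matrix (Fin n) (Fin n) ℂ), (imaginaryPart X : Matrix (Fin n) (Fin n) ℂ),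
      (realPart X).2, (imaginaryPart X).2, (realPart_add_I_smul_imaginaryPart X).symm⟩
  ext g h
  let q : (Fin n → Fin n) → (Fin n → Fin n) → Polynomial ℂ := fun a b =>
    ∏ i, (Polynomial.C (H (a i) (b i)) + Polynomial.X * Polynomial.C (K (a i) (b i)))
  have hq : ∀ a b z, (q a b).eval z = tensorPow (H + z • K) a b := by
    intro a b z
    simp [q, tensorPow, Polynomial.eval_prod, mul_comm z]
  let p : Polynomial ℂ := ∑ k, (Polynomial.C (T g k) * q k h) - ∑ k, q g k * Polynomial.C (T k h)
  have hp : ∀ z, p.eval z = (T * tensorPow (H + z • K)) g h - (tensorPow (H + z • K) * T) g h := by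
    intro z
    simp [p, Polynomial.eval_finsetSum, hq, Matrix.mul_apply]
  have hp0 : p = 0 := by
    apply Polynomial.eq_zero_of_infinite_isRoot
    refine (Set.infinite_range_of_injective Complex.ofReal_injective).mono ?_
    rintro _ ⟨r, rfl⟩
    change p.eval _ = 0
    rw [hp, sub_eq_zero]
    have : (H + (r : ℂ) • K).IsHermitian := by
      refine hH.add ?_
      unfold Matrix.IsHermitian
      rw [Matrix.conjTranspose_smul, hK.eq]
      simp
    rw [(commute_hermitian T hT _ this).eq]
  have := hp Complex.I
  rw [hp0, Polynomial.eval_zero] at this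
  exact (sub_eq_zero.mp this.symm)

/-- key identity -/
lemma key_identity {n : ℕ} (T : Matrix (Fin n → Fin n) (Fin n → Fin n) ℂ)
    (hT : ∀ v : Matrix.unitaryGroup (Fin n) ℂ,
      Commute T (tensorPow (v : Matrix (Fin n) (Fin n) ℂ)))
    (f : Fin n → Fin n) :
    T f f = ∑ σ : Equiv.Perm (Fin n), if f ∘ σ = f then T id σ else 0 := by
  classical
  let X : Matrix (Fin n) (Fin n) ℂ := Matrix.of fun a b => if f a = b then 1 else 0
  have hX : ∀ a b, tensorPow X a b = if f ∘ a = b then 1 else 0 := by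
    intro a b
    simp only [tensorPow, X, Matrix.of_apply]
    rw [Finset.prod_ite_zero]
    simp [funext_iff]
  have hc := congrFun (congrFun (commute_all T hT X).eq id) f
  simp only [Matrix.mul_apply, hX] at hc
  simp only [Function.comp_id, ite_mul, one_mul, zero_mul, mul_ite, mul_one, mul_zero,
    Finset.sum_ite_eq, Finset.mem_univ, if_true] at hc
  rw [← hc]
  symm
  apply Finset.sum_of_injOn (fun σ : Equiv.Perm (Fin n) => (σ : Fin n → Fin n))
  · intro a _ b _ hab
    exact DFunLike.coe_injective hab
  · intro a _; simp
  · intro g _ hg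
    split_ifs with hfg
    · by_contra hne
      apply hg
      have hsurj : Function.Surjective g := by
        intro k
        by_contra hk
        push Not at hk
        apply hne
        apply entry_zero_of_count_ne T hT id g k
        have h1 : (Finset.univ.filter (fun i => g i = k)) = ∅ := by
          simpa [Finset.filter_eq_empty_iff] using hk
        rw [h1]
        simp [Finset.filter_eq']
      exact ⟨Equiv.ofBijective g (Finite.injective_iff_bijective.mp
        (Finite.injective_iff_surjective.mpr hsurj)), by simp, rfl⟩
    · rfl
  · intro σ _; rfl

lemma card_fibers (n : ℕ) (γ : Fin n → ℕ) (hγ : ∑ i, γ i = n) :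
    (Finset.univ.filter (fun f : Fin n → Fin n =>
      ∀ j, (Finset.univ.filter (fun i => f i = j)).card = γ j)).card =
      Nat.multinomial Finset.univ γ := by
  classical
  have h1 := Finset.sum_pow_eq_sum_piAntidiag (Finset.univ : Finset (Fin n))
    (fun i => (MvPolynomial.X i : MvPolynomial (Fin n) ℕ)) n
  rw [Fintype.sum_pow] at h1
  have h2 : ∀ e : Fin n → ℕ, ∏ j, (MvPolynomial.X j : MvPolynomial (Fin n) ℕ) ^ e j =
      MvPolynomial.monomial (Finsupp.equivFunOnFinite.symm e) 1 := by
    intro e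
    rw [MvPolynomial.monomial_eq, Finsupp.prod_fintype]
    · simp
    · simp
  have h3 : ∀ f : Fin n → Fin n, ∏ i, (MvPolynomial.X (f i) : MvPolynomial (Fin n) ℕ) =
      ∏ j, (MvPolynomial.X j : MvPolynomial (Fin n) ℕ) ^
        (Finset.univ.filter (fun i => f i = j)).card := by
    intro f
    rw [← Finset.prod_fiberwise Finset.univ f]
    refine Finset.prod_congr rfl fun j _ => ?_
    rw [Finset.prod_congr rfl (g := fun _ => MvPolynomial.X j), Finset.prod_const]
    intro x hx
    rw [(Finset.mem_filter.mp hx).2]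
  simp_rw [h3, h2] at h1
  have h4 := congrArg (MvPolynomial.coeff (Finsupp.equivFunOnFinite.symm γ)) h1
  simp only [MvPolynomial.coeff_sum, MvPolynomial.coeff_monomial, ← MvPolynomial.C_eq_coe_nat,
    MvPolynomial.coeff_C_mul, EmbeddingLike.apply_eq_iff_eq] at h4
  rw [Finset.card_filter]
  simp only [funext_iff] at h4
  rw [h4]
  simp only [← funext_iff]
  simp [hγ]

lemma continuous_conjU_s2 {n : ℕ} (A : Matrix (Fin n) (Fin n) ℂ) : Continuous (conjU A) := by
  unfold conjU
  exact (continuous_subtype_val.mul continuous_const).mul continuous_subtype_val.star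

lemma continuous_entry {n : ℕ} (A : Matrix (Fin n) (Fin n) ℂ) (g h : Fin n → Fin n) :
    Continuous (fun u => tensorPow (conjU A u) g h) := by
  simp only [tensorPow, Matrix.of_apply]
  exact continuous_finsetProd _ fun i _ => (continuous_conjU_s2 A).matrix_elem _ _

lemma integrable_entry {n : ℕ} (μ : Measure (Matrix.unitaryGroup (Fin n) ℂ))
    [IsProbabilityMeasure μ] (A : Matrix (Fin n) (Fin n) ℂ) (g h : Fin n → Fin n) :
    Integrable (fun u => tensorPow (conjU A u) g h) μ := by
  refine Integrable.of_bound (continuous_entry A g h).aestronglyMeasurable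
    (∏ i : Fin n, ∑ a, ∑ b, ‖A b a‖) (Filter.Eventually.of_forall fun u => ?_)
  simp only [tensorPow, Matrix.of_apply]
  rw [norm_prod]
  refine Finset.prod_le_prod (fun _ _ => norm_nonneg _) fun i _ => ?_
  simp only [conjU, Matrix.mul_apply]
  refine (norm_sum_le _ _).trans (Finset.sum_le_sum fun a _ => ?_)
  have hb := fun i j => entry_norm_bound_of_unitary u.2 i j
  rw [norm_mul, Matrix.star_apply, norm_star]
  refine (mul_le_of_le_one_right (norm_nonneg _) (hb _ _)).trans ?_
  refine (norm_sum_le _ _).trans (Finset.sum_le_sum fun b _ => ?_)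
  rw [norm_mul]
  exact mul_le_of_le_one_left (norm_nonneg _) (hb _ _)

lemma commute_integral {n : ℕ} (μ : Measure (Matrix.unitaryGroup (Fin n) ℂ))
    [μ.IsMulLeftInvariant] [IsProbabilityMeasure μ] (A : Matrix (Fin n) (Fin n) ℂ)
    (v : Matrix.unitaryGroup (Fin n) ℂ) :
    Commute (Matrix.of fun g h => ∫ u, tensorPow (conjU A u) g h ∂μ)
      (tensorPow (v : Matrix (Fin n) (Fin n) ℂ)) := by
  have hconj : ∀ u, tensorPow (conjU A (v * u)) * tensorPow (v : Matrix (Fin n) (Fin n) ℂ) =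
      tensorPow (v : Matrix (Fin n) (Fin n) ℂ) * tensorPow (conjU A u) := by
    intro u
    rw [← tensorPow_mul, ← tensorPow_mul]
    congr 1
    have hv : star (v : Matrix (Fin n) (Fin n) ℂ) * v = 1 := Unitary.coe_star_mul_self v
    simp only [conjU, Submonoid.coe_mul, star_mul, mul_assoc]
    rw [hv, mul_one]
  ext g h
  simp only [Matrix.mul_apply, Matrix.of_apply]
  have hL : ∀ k, ∫ u, tensorPow (conjU A u) g k ∂μ = ∫ u, tensorPow (conjU A (v * u)) g k ∂μ :=
    fun k => (integral_mul_left_eq_self (fun u => tensorPow (conjU A u) g k) v).symm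
  have hI : ∀ k, Integrable (fun u => tensorPow (conjU A (v * u)) g k) μ :=
    fun k => (integrable_entry μ A g k).comp_mul_left v
  simp_rw [hL, ← integral_mul_const, ← integral_const_mul]
  rw [← integral_finsetSum, ← integral_finsetSum]
  · refine integral_congr_ae (Filter.Eventually.of_forall fun u => ?_)
    have := congrFun (congrFun (hconj u) g) h
    simpa only [Matrix.mul_apply] using this
  · exact fun k _ => (integrable_entry μ A k h).const_mul _
  · exact fun k _ => (hI k).mul_const _

theorem stmt2 (n : ℕ) (hn : 1 ≤ n)
    (μ : Measure (Matrix.unitaryGroup (Fin n) ℂ))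
    [μ.IsMulLeftInvariant] [IsProbabilityMeasure μ]
    (A : Matrix (Fin n) (Fin n) ℂ)
    (γ : Fin n → ℕ) (hγ : IsPartition n γ) :
    ∫ u, dInduced γ (conjU A u) ∂μ =
      (Nat.multinomial Finset.univ γ : ℂ) * ∫ u, ∏ i, (conjU A u) i i ^ γ i ∂μ := by
  classical
  have hkey := key_identity _ (commute_integral μ A)
  simp only [Matrix.of_apply] at hkey
  set F := Finset.univ.filter (fun f : Fin n → Fin n =>
      ∀ j, (Finset.univ.filter (fun i => f i = j)).card = γ j) with hF
  have hchar : ∀ σ : Equiv.Perm (Fin n), (inducedChar n γ σ : ℂ) =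
      ∑ f ∈ F, if f ∘ σ = f then 1 else 0 := by
    intro σ
    rw [Finset.sum_boole, hF, Finset.filter_filter]
    unfold inducedChar
    rw [Nat.card_eq_fintype_card, Fintype.card_subtype]
    simp [Nat.card_eq_fintype_card, Fintype.card_subtype]
  have hl : ∫ u, dInduced γ (conjU A u) ∂μ = ∑ σ : Equiv.Perm (Fin n),
      (inducedChar n γ σ : ℂ) * ∫ u, tensorPow (conjU A u) id σ ∂μ := by
    simp_rw [← integral_const_mul]
    rw [← integral_finsetSum]
    · rfl
    · exact fun σ _ => (integrable_entry μ A id σ).const_mul _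
  have hr : ∀ f ∈ F, ∫ u, tensorPow (conjU A u) f f ∂μ =
      ∫ u, ∏ i, (conjU A u) i i ^ γ i ∂μ := by
    intro f hf
    have hf' := (Finset.mem_filter.mp hf).2
    refine integral_congr_ae (Filter.Eventually.of_forall fun u => ?_)
    simp only [tensorPow, Matrix.of_apply]
    rw [← Finset.prod_fiberwise Finset.univ f]
    refine Finset.prod_congr rfl fun j _ => ?_
    rw [← hf' j, Finset.prod_congr rfl (g := fun _ => conjU A u j j), Finset.prod_const]
    intro x hx
    rw [(Finset.mem_filter.mp hx).2]
  rw [hl]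
  simp_rw [hchar, Finset.sum_mul]
  rw [Finset.sum_comm, ← card_fibers n γ hγ.2, ← hF, ← nsmul_eq_mul, ← Finset.sum_const]
  refine Finset.sum_congr rfl fun f hf => ?_
  rw [← hr f hf, hkey f]
  refine Finset.sum_congr rfl fun σ _ => ?_
  split_ifs <;> simp
end

section
/- Let n ≥ 1, let b_1, …, b_n be nonnegative real numbers, and let η and η' be partitions of n with η ⊵ η' in the dominance order. Then Σ_{σ ∈ S_n} ∏_{i=1}^n b_{σ(i)}^{η_i} ≥ Σ_{σ ∈ S_n} ∏_{i=1}^n b_{σ(i)}^{η'_i}; equivalently, the permanent of the n×n matrix whose (i,j) entry is b_j^{η_i} is at least the permanent of the matrix whose (i,j) entry is b_j^{η'_i}. (Formulas (24)–(26).) -/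
lemma two_var_ineq (x y : ℝ) (hx : 0 ≤ x) (hy : 0 ≤ y) (c e : ℕ) :
    x ^ (c + e) * y ^ (c + 1) + y ^ (c + e) * x ^ (c + 1) ≤
      x ^ (c + e + 1) * y ^ c + y ^ (c + e + 1) * x ^ c := by
  have h1 : 0 ≤ (x ^ e - y ^ e) * (x - y) := by
    rcases le_total x y with h | h
    · exact mul_nonneg_of_nonpos_of_nonpos (sub_nonpos.2 (pow_le_pow_left₀ hx h e))
        (sub_nonpos.2 h)
    · exact mul_nonneg (sub_nonneg.2 (pow_le_pow_left₀ hy h e)) (sub_nonneg.2 h)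
  have h2 : 0 ≤ x ^ c * y ^ c := by positivity
  have h3 := mul_nonneg h2 h1
  have h4 : x ^ c * y ^ c * ((x ^ e - y ^ e) * (x - y)) =
      (x ^ (c + e + 1) * y ^ c + y ^ (c + e + 1) * x ^ c) -
      (x ^ (c + e) * y ^ (c + 1) + y ^ (c + e) * x ^ (c + 1)) := by ring
  linarith

lemma transfer_step {n : ℕ} (b : Fin n → ℝ) (hb : ∀ i, 0 ≤ b i) (η ν : Fin n → ℕ)
    (j k : Fin n) (hjk : j ≠ k) (c e : ℕ) (h1 : η j = c + e + 1) (h2 : η k = c)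
    (h3 : ν j = c + e) (h4 : ν k = c + 1) (h5 : ∀ i, i ≠ j → i ≠ k → ν i = η i) :
    ∑ σ : Equiv.Perm (Fin n), ∏ i, b (σ i) ^ ν i ≤
      ∑ σ : Equiv.Perm (Fin n), ∏ i, b (σ i) ^ η i := by
  have split : ∀ f : Fin n → ℝ,
      ∏ i, f i = f j * f k * ∏ i ∈ (Finset.univ.erase j).erase k, f i := by
    intro f
    rw [← Finset.mul_prod_erase Finset.univ f (Finset.mem_univ j),
      ← Finset.mul_prod_erase (Finset.univ.erase j) f (a := k) (by simp [hjk.symm]), mul_assoc]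
  have sw : ∀ μ : Fin n → ℕ, ∑ σ : Equiv.Perm (Fin n), ∏ i, b (σ i) ^ μ i =
      ∑ σ : Equiv.Perm (Fin n), ∏ i, b ((σ * Equiv.swap j k) i) ^ μ i := by
    intro μ
    exact (Equiv.sum_comp (Equiv.mulRight (Equiv.swap j k))
      (fun σ : Equiv.Perm (Fin n) => ∏ i, b (σ i) ^ μ i)).symm
  have key : ∑ σ : Equiv.Perm (Fin n), (∏ i, b (σ i) ^ ν i +
        ∏ i, b ((σ * Equiv.swap j k) i) ^ ν i) ≤
      ∑ σ : Equiv.Perm (Fin n), (∏ i, b (σ i) ^ η i +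
        ∏ i, b ((σ * Equiv.swap j k) i) ^ η i) := by
    refine Finset.sum_le_sum fun σ _ => ?_
    have rest : ∀ i ∈ (Finset.univ.erase j).erase k, i ≠ j ∧ i ≠ k := by
      intro i hi
      simp at hi
      tauto
    have e1 : ∀ μ : Fin n → ℕ,
        ∏ i ∈ (Finset.univ.erase j).erase k, b ((σ * Equiv.swap j k) i) ^ μ i =
        ∏ i ∈ (Finset.univ.erase j).erase k, b (σ i) ^ μ i := by
      intro μ
      refine Finset.prod_congr rfl fun i hi => ?_
      rw [Equiv.Perm.mul_apply, Equiv.swap_apply_of_ne_of_ne (rest i hi).1 (rest i hi).2]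
    have e2 : ∏ i ∈ (Finset.univ.erase j).erase k, b (σ i) ^ ν i =
        ∏ i ∈ (Finset.univ.erase j).erase k, b (σ i) ^ η i := by
      refine Finset.prod_congr rfl fun i hi => ?_
      rw [h5 i (rest i hi).1 (rest i hi).2]
    simp only [split, e1, e2]
    simp only [Equiv.Perm.mul_apply, Equiv.swap_apply_left, Equiv.swap_apply_right,
      h1, h2, h3, h4, ← add_mul]
    exact mul_le_mul_of_nonneg_right (two_var_ineq _ _ (hb _) (hb _) c e)
      (Finset.prod_nonneg fun i _ => pow_nonneg (hb _) _)
  rw [Finset.sum_add_distrib, Finset.sum_add_distrib, ← sw ν, ← sw η] at key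
  linarith

lemma muirhead_aux {n : ℕ} (b : Fin n → ℝ) (hb : ∀ i, 0 ≤ b i) (η' : Fin n → ℕ)
    (hη' : Antitone η') (N : ℕ) : ∀ η : Fin n → ℕ, ∑ i, (η i - η' i) ≤ N →
    ∑ i, η i = ∑ i, η' i → Dominates η η' →
    ∑ σ : Equiv.Perm (Fin n), ∏ i, b (σ i) ^ η' i ≤
      ∑ σ : Equiv.Perm (Fin n), ∏ i, b (σ i) ^ η i := by
  induction N with
  | zero =>
    intro η hN hs _
    have hle : ∀ i ∈ Finset.univ, η i ≤ η' i := by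
      intro i hi
      have h := Finset.single_le_sum (f := fun i => η i - η' i) (fun _ _ => Nat.zero_le _) hi
      have h' : η i - η' i ≤ ∑ i, (η i - η' i) := h
      omega
    have := (Finset.sum_eq_sum_iff_of_le hle).1 hs
    have : η = η' := funext fun i => this i (Finset.mem_univ i)
    rw [this]
  | succ N ih =>
    intro η hN hs hd
    by_cases hall : ∀ i, η' i ≤ η i
    · have := (Finset.sum_eq_sum_iff_of_le (fun i _ => hall i)).1 hs.symm
      have : η' = η := funext fun i => this i (Finset.mem_univ i)
      rw [this]
    push Not at hall
    obtain ⟨k, hk, hmin⟩ : ∃ k, η k < η' k ∧ ∀ i < k, η' i ≤ η i := by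
      obtain ⟨k, hk⟩ := exists_minimal_of_wellFoundedLT (fun k => η k < η' k) hall
      refine ⟨k, hk.prop, fun i hi => ?_⟩
      by_contra hc
      exact absurd (hk.le_of_le (not_le.1 hc) hi.le) (not_le.2 hi)
    obtain ⟨j, hjk, hj⟩ : ∃ j < k, η' j < η j := by
      by_contra! hc
      have h1 := hd k
      have h2 : ∑ i ∈ Finset.Iic k, η i < ∑ i ∈ Finset.Iic k, η' i := by
        refine Finset.sum_lt_sum (fun i hi => ?_) ⟨k, by simp, hk⟩
        rcases (Finset.mem_Iic.1 hi).lt_or_eq with h | h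
        · exact hc i h
        · rw [h]; exact hk.le
      omega
    have hmono := hη' hjk.le
    let ν : Fin n → ℕ := fun i => η i + (if i = k then 1 else 0) - (if i = j then 1 else 0)
    have hν : ∀ i, ν i + (if i = j then 1 else 0) = η i + (if i = k then 1 else 0) := by
      intro i
      simp only [ν]
      by_cases h : i = j
      · subst h; simp; omega
      · simp [h]
    have hνs : ∀ s : Finset (Fin n), ∑ i ∈ s, ν i + (if j ∈ s then 1 else 0) =
        ∑ i ∈ s, η i + (if k ∈ s then 1 else 0) := by
      intro s
      have := Finset.sum_congr (rfl : s = s) (fun i _ => hν i)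
      simpa [Finset.sum_add_distrib] using this
    have hνj : ν j + 1 = η j := by simpa [hjk.ne] using hν j
    have hνk : ν k = η k + 1 := by simpa [hjk.ne'] using hν k
    have hνo : ∀ i, i ≠ j → i ≠ k → ν i = η i := by
      intro i h1 h2
      simpa [h1, h2] using hν i
    refine le_trans (ih ν ?_ ?_ ?_) (transfer_step b hb η ν j k hjk.ne (η k) (η j - η k - 1)
      (by omega) rfl (by omega) hνk hνo)
    · have : ∑ i, (ν i - η' i) < ∑ i, (η i - η' i) := by
        refine Finset.sum_lt_sum (fun i _ => ?_) ⟨j, Finset.mem_univ j, by omega⟩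
        by_cases h1 : i = j
        · subst h1; omega
        by_cases h2 : i = k
        · subst h2; omega
        rw [hνo i h1 h2]
      omega
    · have := hνs Finset.univ
      simp at this
      omega
    · intro m
      have h1 := hνs (Finset.Iic m)
      have h2 := hd m
      simp only [Finset.mem_Iic] at h1
      by_cases hkm : k ≤ m
      · rw [if_pos hkm, if_pos (hjk.le.trans hkm)] at h1
        omega
      by_cases hjm : j ≤ m
      · rw [if_neg hkm, if_pos hjm] at h1
        have h3 : ∑ i ∈ Finset.Iic m, η' i < ∑ i ∈ Finset.Iic m, η i := by
          refine Finset.sum_lt_sum (fun i hi => ?_) ⟨j, by simpa using hjm, hj⟩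
          exact hmin i (lt_of_le_of_lt (Finset.mem_Iic.1 hi) (not_le.1 hkm))
        omega
      · rw [if_neg hkm, if_neg hjm] at h1
        omega

theorem stmt4 (n : ℕ) (hn : 1 ≤ n) (b : Fin n → ℝ) (hb : ∀ i, 0 ≤ b i)
    (η η' : Fin n → ℕ) (hη : IsPartition n η) (hη' : IsPartition n η')
    (hdom : Dominates η η') :
    ∑ σ : Equiv.Perm (Fin n), ∏ i, b (σ i) ^ η' i ≤
      ∑ σ : Equiv.Perm (Fin n), ∏ i, b (σ i) ^ η i := by
  exact muirhead_aux b hb η' hη'.1 _ η le_rfl (hη.2.trans hη'.2.symm) hdom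
end

section
/- Let a and b be positive real numbers and let n be a real number. Then the function φ(x) = a^x b^{n−x} + a^{n−x} b^x is monotone nondecreasing on the interval [n/2, ∞); that is, for all real x, y with n/2 ≤ x ≤ y one has a^x b^{n−x} + a^{n−x} b^x ≤ a^y b^{n−y} + a^{n−y} b^y. (Lemma 8.) -/
theorem stmt5_aux (a b : ℝ) (ha : 0 < a) (hb : 0 < b) (n x : ℝ) :
    a ^ x * b ^ (n - x) + a ^ (n - x) * b ^ x =
      2 * Real.exp (n / 2 * (Real.log a + Real.log b)) *
        Real.cosh ((x - n / 2) * (Real.log a - Real.log b)) := by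
  rw [Real.cosh_eq]
  simp only [Real.rpow_def_of_pos ha, Real.rpow_def_of_pos hb, ← Real.exp_add]
  have h : ∀ u v w : ℝ, 2 * u * ((v + w) / 2) = u * v + u * w := by intros; ring
  rw [h, ← Real.exp_add, ← Real.exp_add]
  congr 2 <;> ring

theorem stmt5 (a b : ℝ) (ha : 0 < a) (hb : 0 < b) (n : ℝ) (x y : ℝ)
    (hx : n / 2 ≤ x) (hxy : x ≤ y) :
    a ^ x * b ^ (n - x) + a ^ (n - x) * b ^ x ≤
      a ^ y * b ^ (n - y) + a ^ (n - y) * b ^ y := by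
  rw [stmt5_aux a b ha hb, stmt5_aux a b ha hb]
  refine mul_le_mul_of_nonneg_left ?_ (by positivity)
  rw [Real.cosh_le_cosh, abs_mul, abs_mul]
  refine mul_le_mul_of_nonneg_right ?_ (abs_nonneg _)
  rw [abs_of_nonneg (by linarith), abs_of_nonneg (by linarith)]
  linarith
end

section
/- Let n ≥ 2, let A be an n×n positive semidefinite complex matrix, and let η = (η_1, η_2) be a two-part partition of n with η_1 ≥ η_2 ≥ 1, and set η' = (η_1 + 1, η_2 − 1). Then (Re ∫_{U(n)} d_{[η]}(u A u*) du − Re ∫_{U(n)} d_{[η']}(u A u*) du) / (C(n, η_2) − C(n, η_2 − 1)) ≤ Re ∫_{U(n)} per(u A u*) du, where C(n, k) is the binomial coefficient and per denotes the permanent. (Averaged version of the James–Liebeck theorem, Theorem 8.) -/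
open MeasureTheory Matrix
open scoped ComplexOrder

theorem jl_posSemidef_prod {ι κ : Type*} [Finite ι] (s : Finset κ) (M : κ → Matrix ι ι ℂ)
    (h : ∀ i ∈ s, (M i).PosSemidef) :
    (Matrix.of fun a b => ∏ i ∈ s, M i a b).PosSemidef := by
  classical
  induction s using Finset.induction_on with
  | empty =>
    have := Matrix.posSemidef_vecMulVec_self_star (fun _ : ι => (1 : ℂ))
    convert this using 1
    ext a b
    simp [Matrix.vecMulVec_apply]
  | insert i s hi ih =>
    have h1 := (h i (Finset.mem_insert_self _ _)).hadamard
      (ih fun j hj => h j (Finset.mem_insert_of_mem hj))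
    have h2 : (Matrix.of fun a b => ∏ j ∈ insert i s, M j a b) =
        (M i).hadamard (Matrix.of fun a b => ∏ j ∈ s, M j a b) := by
      ext a b
      simp [Matrix.hadamard_apply, Finset.prod_insert hi]
    rw [h2]
    exact h1

/-- the Young subgroup of permutations preserving `S` -/
abbrev JLH {n : ℕ} (S : Finset (Fin n)) : Type :=
  Equiv.Perm {i // i ∈ S} × Equiv.Perm {i // ¬ i ∈ S}

def jlc {n : ℕ} {S : Finset (Fin n)} (x : JLH S) : Equiv.Perm (Fin n) :=
  Equiv.Perm.subtypeCongr x.1 x.2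

theorem jlc_mem {n : ℕ} {S : Finset (Fin n)} (x : JLH S) (i : Fin n) : jlc x i ∈ S ↔ i ∈ S := by
  unfold jlc
  by_cases h : i ∈ S
  · rw [Equiv.Perm.subtypeCongr.left_apply _ _ h]; simp [h]
  · rw [Equiv.Perm.subtypeCongr.right_apply _ _ h]
    simp only [h, iff_false]; exact (x.2 ⟨i, h⟩).2

theorem jlc_left {n : ℕ} {S : Finset (Fin n)} (p p' q : _) (i : Fin n) (h : i ∈ S) :
    jlc ((p, q) : JLH S) i = jlc ((p, p') : JLH S) i := by
  simp [jlc, Equiv.Perm.subtypeCongr.left_apply _ _ h]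

theorem jlc_right {n : ℕ} {S : Finset (Fin n)} (p p' q : _) (i : Fin n) (h : i ∉ S) :
    jlc ((p, q) : JLH S) i = jlc ((p', q) : JLH S) i := by
  simp [jlc, Equiv.Perm.subtypeCongr.right_apply _ _ h]

theorem jl_pos_tau {n : ℕ} (A : Matrix (Fin n) (Fin n) ℂ) (hA : A.PosSemidef)
    (S : Finset (Fin n)) (τ : Equiv.Perm (Fin n)) (hinv : ∀ i, τ (τ i) = i)
    (hfix : ∀ i, (i ∈ S ↔ τ i ∈ S) → τ i = i) :
    0 ≤ ∑ x : JLH S, ∑ y : JLH S, ∏ i, A (jlc x i) (jlc y (τ i)) := by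
  classical
  let a : JLH S → ℂ := fun g => ∏ i with (i ∈ S ∧ τ i ∉ S), A (jlc g i) (jlc g (τ i))
  let K1 : Matrix (JLH S) (JLH S) ℂ := Matrix.of fun g g' =>
    ∏ i with (i ∈ S ∧ τ i ∈ S), A.submatrix (fun g : JLH S => jlc g i) (fun g : JLH S => jlc g i) g g'
  let K2 : Matrix (JLH S) (JLH S) ℂ := Matrix.of fun g g' =>
    ∏ i with (i ∉ S ∧ τ i ∉ S), Aᵀ.submatrix (fun g : JLH S => jlc g i) (fun g : JLH S => jlc g i) g g'
  have hK1 : K1.PosSemidef := jl_posSemidef_prod _ _ fun i _ => hA.submatrix _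
  have hK2 : K2.PosSemidef := jl_posSemidef_prod _ _ fun i _ => hA.transpose.submatrix _
  have hK := (hK1.hadamard hK2).dotProduct_mulVec_nonneg (star a)
  have key : ∀ (p p' : Equiv.Perm {i // i ∈ S}) (q q' : Equiv.Perm {i // ¬ i ∈ S}),
      ∏ i, A (jlc ((p, q) : JLH S) i) (jlc ((p', q') : JLH S) (τ i)) =
      a (p, q') * (K1 (p, q') (p', q) * K2 (p, q') (p', q)) * star (a (p', q)) := by
    intro p p' q q'
    have e1 : a (p, q') = ∏ i with (i ∈ S ∧ τ i ∉ S),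
        A (jlc ((p, q) : JLH S) i) (jlc ((p', q') : JLH S) (τ i)) := by
      refine Finset.prod_congr rfl fun i hi => ?_
      simp only [Finset.mem_filter, Finset.mem_univ, true_and] at hi
      rw [jlc_left p q q' i hi.1, jlc_right p p' q' _ hi.2]
    have e2 : star (a (p', q)) = ∏ i with (i ∉ S ∧ τ i ∈ S),
        A (jlc ((p, q) : JLH S) i) (jlc ((p', q') : JLH S) (τ i)) := by
      simp only [a, star_prod]
      refine Finset.prod_bij' (fun i _ => τ i) (fun i _ => τ i) ?_ ?_ ?_ ?_ ?_
      · intro i hi; simp only [Finset.mem_filter, Finset.mem_univ, true_and] at hi ⊢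
        simp [hinv, hi]
      · intro i hi; simp only [Finset.mem_filter, Finset.mem_univ, true_and] at hi ⊢
        simp [hinv, hi]
      · intro i _; exact hinv i
      · intro i _; exact hinv i
      · intro i hi
        simp only [Finset.mem_filter, Finset.mem_univ, true_and] at hi
        rw [hA.1.apply, hinv, jlc_left p' q q' i hi.1, jlc_right p p' q _ hi.2,
          jlc_left p' q' q i hi.1]
    have e3 : K1 (p, q') (p', q) = ∏ i with (i ∈ S ∧ τ i ∈ S),
        A (jlc ((p, q) : JLH S) i) (jlc ((p', q') : JLH S) (τ i)) := by
      simp only [K1, Matrix.of_apply]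
      refine Finset.prod_congr rfl fun i hi => ?_
      simp only [Finset.mem_filter, Finset.mem_univ, true_and] at hi
      rw [hfix i (by simp [hi])]
      simp only [Matrix.submatrix_apply]
      rw [jlc_left p q q' i hi.1, jlc_left p' q q' i hi.1]
    have e4 : K2 (p, q') (p', q) = ∏ i with (i ∉ S ∧ τ i ∉ S),
        A (jlc ((p, q) : JLH S) i) (jlc ((p', q') : JLH S) (τ i)) := by
      simp only [K2, Matrix.of_apply]
      refine Finset.prod_congr rfl fun i hi => ?_
      simp only [Finset.mem_filter, Finset.mem_univ, true_and] at hi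
      rw [hfix i (by simp [hi])]
      simp only [Matrix.submatrix_apply, Matrix.transpose_apply]
      rw [jlc_right p p' q i hi.1, jlc_right p p' q' i hi.1]
    rw [e1, e2, e3, e4]
    rw [← Finset.prod_filter_mul_prod_filter_not Finset.univ (fun i => i ∈ S),
      ← Finset.prod_filter_mul_prod_filter_not (Finset.univ.filter fun i => i ∈ S) (fun i => τ i ∈ S),
      ← Finset.prod_filter_mul_prod_filter_not (Finset.univ.filter fun i => ¬ i ∈ S) (fun i => τ i ∈ S)]
    simp only [Finset.filter_filter]
    ring
  have : ∑ x : JLH S, ∑ y : JLH S, ∏ i, A (jlc x i) (jlc y (τ i)) =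
      star (star a) ⬝ᵥ (K1.hadamard K2 *ᵥ star a) := by
    simp only [dotProduct, Matrix.mulVec, star_star, Matrix.hadamard_apply, Pi.star_apply,
      Finset.mul_sum, Fintype.sum_prod_type, key]
    refine Finset.sum_congr rfl fun p _ => ?_
    rw [Finset.sum_comm]
    rw [Finset.sum_comm]
    conv_lhs =>
      enter [2, q]
      rw [Finset.sum_comm]
    rw [Finset.sum_comm]
    refine Finset.sum_congr rfl fun q' _ => ?_
    rw [Finset.sum_comm]
    refine Finset.sum_congr rfl fun p' _ => ?_
    refine Finset.sum_congr rfl fun q _ => ?_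
    ring
  rw [this]; exact hK

theorem jl_exists_tau {n : ℕ} (S : Finset (Fin n)) (σ : Equiv.Perm (Fin n)) :
    ∃ τ : Equiv.Perm (Fin n), (∀ i, τ (τ i) = i) ∧ (∀ i, (i ∈ S ↔ τ i ∈ S) → τ i = i) ∧
      ∀ i, τ i ∈ S ↔ σ i ∈ S := by
  classical
  have hcard : Fintype.card {i // i ∈ S ∧ σ i ∉ S} = Fintype.card {i // i ∉ S ∧ σ i ∈ S} := by
    simp only [Fintype.card_subtype]
    have h1 : (Finset.univ.filter fun i => σ i ∈ S).card = S.card := by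
      rw [← Finset.card_map σ.toEmbedding]
      congr 1
      ext j
      simp only [Finset.mem_map, Finset.mem_filter, Finset.mem_univ, true_and,
        Equiv.coe_toEmbedding]
      exact ⟨fun ⟨i, hi, e⟩ => e ▸ hi, fun h => ⟨σ.symm j, by simpa using h, by simp⟩⟩
    have h2 := Finset.card_filter_add_card_filter_not (s := Finset.univ.filter fun i => σ i ∈ S)
      (fun i => i ∈ S)
    have h3 := Finset.card_filter_add_card_filter_not (s := Finset.univ.filter fun i => i ∈ S)
      (fun i => σ i ∈ S)
    simp only [Finset.filter_filter] at h2 h3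
    have h4 : (Finset.univ.filter fun i => i ∈ S).card = S.card := by simp
    simp only [and_comm] at h2 h3 ⊢
    omega
  let β := Fintype.equivOfCardEq hcard
  let f : Fin n → Fin n := fun i =>
    if h : i ∈ S ∧ σ i ∉ S then β ⟨i, h⟩ else if h : i ∉ S ∧ σ i ∈ S then β.symm ⟨i, h⟩ else i
  have f1 : ∀ i (h : i ∈ S ∧ σ i ∉ S), f i = β ⟨i, h⟩ := fun i h => by simp only [f, dif_pos h]
  have f2 : ∀ i (h : i ∉ S ∧ σ i ∈ S), f i = β.symm ⟨i, h⟩ := fun i h => by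
    have : ¬ (i ∈ S ∧ σ i ∉ S) := by tauto
    simp only [f, dif_neg this, dif_pos h]
  have f3 : ∀ i (h : i ∈ S ↔ σ i ∈ S), f i = i := fun i h => by
    have h1 : ¬ (i ∈ S ∧ σ i ∉ S) := by tauto
    have h2 : ¬ (i ∉ S ∧ σ i ∈ S) := by tauto
    simp only [f, dif_neg h1, dif_neg h2]
  have hcases : ∀ i, (i ∈ S ∧ σ i ∉ S) ∨ (i ∉ S ∧ σ i ∈ S) ∨ (i ∈ S ↔ σ i ∈ S) := by
    intro i; tauto
  have hf : Function.Involutive f := by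
    intro i
    rcases hcases i with h | h | h
    · rw [f1 i h, f2 _ (β ⟨i, h⟩).2]; simp
    · rw [f2 i h, f1 _ (β.symm ⟨i, h⟩).2]; simp
    · rw [f3 i h, f3 i h]
  have hm : ∀ i, f i ∈ S ↔ σ i ∈ S := by
    intro i
    rcases hcases i with h | h | h
    · rw [f1 i h]; have := (β ⟨i, h⟩).2; tauto
    · rw [f2 i h]; have := (β.symm ⟨i, h⟩).2; tauto
    · rw [f3 i h]; exact h
  refine ⟨hf.toPerm, fun i => hf i, fun i h => ?_, hm⟩
  simp only [Function.Involutive.coe_toPerm] at h ⊢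
  exact f3 i (h.trans (hm i))

theorem jlc_mul {n : ℕ} {S : Finset (Fin n)} (x y : JLH S) : jlc (x * y) = jlc x * jlc y :=
  map_mul (Equiv.Perm.subtypeCongrHom (fun i => i ∈ S)) x y

theorem jlc_surj {n : ℕ} {S : Finset (Fin n)} (h : Equiv.Perm (Fin n)) (hh : ∀ i, h i ∈ S ↔ i ∈ S) :
    ∃ x : JLH S, jlc x = h := by
  refine ⟨(h.subtypePerm hh, h.subtypePerm fun i => not_congr (hh i)), ?_⟩
  ext i
  unfold jlc
  by_cases hi : i ∈ S
  · rw [Equiv.Perm.subtypeCongr.left_apply _ _ hi]; simp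
  · rw [Equiv.Perm.subtypeCongr.right_apply _ _ hi]; simp

theorem jl_pos_sigma {n : ℕ} (A : Matrix (Fin n) (Fin n) ℂ) (hA : A.PosSemidef)
    (S : Finset (Fin n)) (σ : Equiv.Perm (Fin n)) :
    0 ≤ ∑ x : JLH S, ∑ y : JLH S, ∏ i, A (jlc x i) (jlc y (σ i)) := by
  obtain ⟨τ, h1, h2, h3⟩ := jl_exists_tau S σ
  obtain ⟨z, hz⟩ := jlc_surj (S := S) (τ * σ⁻¹) (fun i => by
    rw [Equiv.Perm.mul_apply, h3]; simp)
  have := jl_pos_tau A hA S τ h1 h2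
  have e : ∀ x : JLH S, ∑ y : JLH S, ∏ i, A (jlc x i) (jlc y (τ i)) =
      ∑ y : JLH S, ∏ i, A (jlc x i) (jlc y (σ i)) := by
    intro x
    refine Fintype.sum_equiv (Equiv.mulRight z) _ _ fun y => ?_
    refine Finset.prod_congr rfl fun i _ => ?_
    simp [jlc_mul, hz]
  simpa only [e] using this

theorem jl_biinv {n : ℕ} (A : Matrix (Fin n) (Fin n) ℂ) (hA : A.PosSemidef)
    (S : Finset (Fin n)) (F : Equiv.Perm (Fin n) → ℝ) (hF0 : ∀ σ, 0 ≤ F σ)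
    (hF : ∀ (x y : JLH S) σ, F (jlc y * σ * (jlc x)⁻¹) = F σ) :
    0 ≤ (∑ σ : Equiv.Perm (Fin n), (F σ : ℂ) * ∏ i, A i (σ i)).re := by
  have e : ∀ x y : JLH S, ∑ σ : Equiv.Perm (Fin n), (F σ : ℂ) * ∏ i, A i (σ i) =
      ∑ σ : Equiv.Perm (Fin n), (F σ : ℂ) * ∏ i, A (jlc x i) (jlc y (σ i)) := by
    intro x y
    symm
    refine Fintype.sum_equiv ((Equiv.mulLeft (jlc y)).trans (Equiv.mulRight (jlc x)⁻¹)) _ _ fun σ => ?_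
    simp only [Equiv.trans_apply, Equiv.coe_mulLeft, Equiv.coe_mulRight, hF]
    congr 1
    refine Fintype.prod_equiv (jlc x) _ _ fun i => ?_
    simp
  have e2 : ((Fintype.card (JLH S) : ℂ) * Fintype.card (JLH S)) *
      ∑ σ : Equiv.Perm (Fin n), (F σ : ℂ) * ∏ i, A i (σ i) =
      ∑ σ : Equiv.Perm (Fin n), (F σ : ℂ) *
        ∑ x : JLH S, ∑ y : JLH S, ∏ i, A (jlc x i) (jlc y (σ i)) := by
    calc _ = ∑ x : JLH S, ∑ y : JLH S, ∑ σ : Equiv.Perm (Fin n), (F σ : ℂ) * ∏ i, A i (σ i) := by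
          simp [mul_assoc]
      _ = ∑ x : JLH S, ∑ y : JLH S, ∑ σ : Equiv.Perm (Fin n),
            (F σ : ℂ) * ∏ i, A (jlc x i) (jlc y (σ i)) :=
          Finset.sum_congr rfl fun x _ => Finset.sum_congr rfl fun y _ => e x y
      _ = _ := by
          simp only [Finset.mul_sum]
          rw [Finset.sum_comm]
          conv_lhs =>
            enter [2, y]
            rw [Finset.sum_comm]
          rw [Finset.sum_comm]
          refine Finset.sum_congr rfl fun σ _ => Finset.sum_comm
  have h3 : 0 ≤ ((Fintype.card (JLH S) : ℂ) * Fintype.card (JLH S)) *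
      ∑ σ : Equiv.Perm (Fin n), (F σ : ℂ) * ∏ i, A i (σ i) := by
    rw [e2]
    refine Finset.sum_nonneg fun σ _ => mul_nonneg ?_ (jl_pos_sigma A hA S σ)
    exact_mod_cast hF0 σ
  have h4 := (Complex.le_def.1 h3).1
  have hc : (0 : ℝ) < (Fintype.card (JLH S) : ℝ) * Fintype.card (JLH S) := by
    have : 0 < Fintype.card (JLH S) := Fintype.card_pos
    positivity
  have h5 : ((Fintype.card (JLH S) : ℂ) * Fintype.card (JLH S)) =
    (((Fintype.card (JLH S) : ℝ) * Fintype.card (JLH S) : ℝ) : ℂ) := by push_cast; rfl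
  rw [h5, Complex.re_ofReal_mul] at h4
  exact (mul_nonneg_iff_of_pos_left hc).1 h4

/-- subsets of `Fin n` with `k` elements -/
abbrev JLP (n k : ℕ) : Type := {S : Finset (Fin n) // S.card = k}

/-- action of permutations on `k`-subsets -/
def jle {n k : ℕ} (σ : Equiv.Perm (Fin n)) : Equiv.Perm (JLP n k) where
  toFun S := ⟨S.1.map σ.toEmbedding, by rw [Finset.card_map]; exact S.2⟩
  invFun S := ⟨S.1.map σ.symm.toEmbedding, by rw [Finset.card_map]; exact S.2⟩
  left_inv S := by apply Subtype.ext; ext i; simp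
  right_inv S := by apply Subtype.ext; ext i; simp

theorem jle_val {n k : ℕ} (σ : Equiv.Perm (Fin n)) (S : JLP n k) :
    (jle σ S).1 = S.1.map σ.toEmbedding := rfl

theorem jle_mul {n k : ℕ} (σ τ : Equiv.Perm (Fin n)) (S : JLP n k) :
    jle (σ * τ) S = jle σ (jle τ S) := by
  apply Subtype.ext
  simp only [jle_val, Finset.map_map]
  rfl

theorem jl_card (n k : ℕ) : Fintype.card (JLP n k) = n.choose k := by
  simp

/-- inclusion matrix -/
def jlE (n k : ℕ) : Matrix (JLP n k) (JLP n (k + 1)) ℝ :=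
  Matrix.of fun R S => if R.1 ⊆ S.1 then 1 else 0

def jlD (n k : ℕ) : Matrix (Finset (Fin n)) (JLP n k) ℝ :=
  Matrix.of fun Q R => if Q ⊆ R.1 ∧ Q.card + 1 = k then 1 else 0

theorem jlEE_apply (n k : ℕ) (hk : k + 1 ≤ n) (R R' : JLP n k) :
    (jlE n k * (jlE n k)ᵀ) R R' = ((R.1 ∪ R'.1)ᶜ.card.choose (n - (k + 1)) : ℝ) := by
  classical
  rw [Matrix.mul_apply]
  simp only [jlE, Matrix.transpose_apply, Matrix.of_apply, mul_ite, mul_one, mul_zero]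
  simp only [← ite_and]
  rw [Finset.sum_boole]
  norm_cast
  rw [← Finset.card_powersetCard]
  refine Finset.card_bij' (fun S _ => S.1ᶜ) (fun Q hQ => ⟨Qᶜ, ?_⟩) ?_ ?_ ?_ ?_
  · rw [Finset.mem_powersetCard] at hQ
    rw [Finset.card_compl, hQ.2, Fintype.card_fin]; omega
  · intro S hS
    simp only [Finset.mem_filter, Finset.mem_univ, true_and] at hS
    rw [Finset.mem_powersetCard]
    refine ⟨Finset.compl_subset_compl.2 (Finset.union_subset hS.2 hS.1), ?_⟩
    rw [Finset.card_compl, S.2, Fintype.card_fin]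
  · intro Q hQ
    rw [Finset.mem_powersetCard] at hQ
    simp only [Finset.mem_filter, Finset.mem_univ, true_and]
    have := Finset.compl_subset_compl.2 hQ.1
    rw [compl_compl, Finset.union_subset_iff] at this
    exact this.symm
  · intro S _; apply Subtype.ext; simp
  · intro Q _; simp

theorem jlDD_apply (n k : ℕ) (R R' : JLP n (k + 1)) :
    ((jlD n (k + 1))ᵀ * jlD n (k + 1)) R R' = ((R.1 ∩ R'.1).card.choose k : ℝ) := by
  classical
  rw [Matrix.mul_apply]
  simp only [jlD, Matrix.transpose_apply, Matrix.of_apply, mul_ite, mul_one, mul_zero]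
  simp only [← ite_and]
  rw [Finset.sum_boole]
  norm_cast
  rw [← Finset.card_powersetCard]
  congr 1
  ext Q
  simp only [Finset.mem_filter, Finset.mem_univ, true_and, Finset.mem_powersetCard,
    Finset.subset_inter_iff]
  constructor
  · rintro ⟨⟨h1, h2⟩, h3, h4⟩; exact ⟨⟨h3, h1⟩, by omega⟩
  · rintro ⟨⟨h1, h2⟩, h3⟩; exact ⟨⟨h2, by omega⟩, h1, by omega⟩

theorem jlEE_eq (n k : ℕ) (hk : 2 * (k + 1) ≤ n) :
    jlE n k * (jlE n k)ᵀ = (jlD n k)ᵀ * jlD n k + ((n : ℝ) - 2 * k) • (1 : Matrix (JLP n k) (JLP n k) ℝ) := by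
  classical
  ext R R'
  rw [jlEE_apply n k (by omega), Matrix.add_apply, Matrix.smul_apply]
  have hc : (R.1 ∪ R'.1)ᶜ.card + (R.1 ∪ R'.1).card = n := by
    rw [Finset.card_compl, Fintype.card_fin]
    have := Finset.card_le_univ (R.1 ∪ R'.1)
    rw [Fintype.card_fin] at this
    omega
  have hi := Finset.card_union_add_card_inter R.1 R'.1
  rw [R.2, R'.2] at hi
  cases k with
  | zero =>
    have h1 : R.1 = ∅ := Finset.card_eq_zero.1 R.2
    have h2 : R'.1 = ∅ := Finset.card_eq_zero.1 R'.2
    have h3 : R = R' := Subtype.ext (h1.trans h2.symm)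
    have h4 : (R.1 ∪ R'.1)ᶜ.card = n := by rw [h1, h2]; simp
    rw [h4]
    have h5 : n.choose (n - (0 + 1)) = n := by
      rw [Nat.choose_symm (by omega)]; simp
    rw [h5, h3]
    simp [jlD, Matrix.mul_apply]
  | succ k =>
    rw [jlDD_apply]
    by_cases h : R = R'
    · subst h
      rw [Finset.union_self] at hc
      rw [Finset.inter_self, Finset.union_self, R.2]
      rw [R.2] at hc
      have h4 : R.1ᶜ.card = n - (k + 1) := by omega
      have h5 : n - (k + 1) = (n - (k + 1 + 1)) + 1 := by omega
      rw [h4, h5, Nat.choose_succ_self_right, Nat.choose_succ_self_right, ← h5,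
        Nat.cast_sub (by omega)]
      simp
      ring
    · have hlt : (R.1 ∩ R'.1).card < k + 1 := by
        by_contra hcon
        apply h
        have h1 : R.1 ∩ R'.1 = R.1 :=
          Finset.eq_of_subset_of_card_le Finset.inter_subset_left (by rw [R.2]; omega)
        have h2 : R.1 ∩ R'.1 = R'.1 :=
          Finset.eq_of_subset_of_card_le Finset.inter_subset_right (by rw [R'.2]; omega)
        exact Subtype.ext (h1.symm.trans h2)
      rw [Matrix.one_apply_ne h, smul_zero, add_zero]
      congr 1
      rcases (Nat.lt_succ_iff.1 hlt).lt_or_eq with h1 | h1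
      · rw [Nat.choose_eq_zero_of_lt (by omega), Nat.choose_eq_zero_of_lt h1]
      · have : (R.1 ∪ R'.1)ᶜ.card = n - (k + 1 + 1) := by omega
        rw [this, h1, Nat.choose_self, Nat.choose_self]

theorem jlEE_isUnit (n k : ℕ) (hk : 2 * (k + 1) ≤ n) : IsUnit (jlE n k * (jlE n k)ᵀ).det := by
  rw [← Matrix.isUnit_iff_isUnit_det]
  apply Matrix.PosDef.isUnit
  rw [jlEE_eq n k hk]
  apply Matrix.PosDef.posSemidef_add
  · exact Matrix.posSemidef_conjTranspose_mul_self (jlD n k)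
  · apply Matrix.PosDef.smul Matrix.PosDef.one
    have : (2 * (k + 1) : ℝ) ≤ n := by exact_mod_cast hk
    linarith

noncomputable def jlG (n k : ℕ) : Matrix (JLP n k) (JLP n k) ℝ := (jlE n k * (jlE n k)ᵀ)⁻¹

noncomputable def jlQ (n k : ℕ) : Matrix (JLP n (k + 1)) (JLP n (k + 1)) ℝ :=
  (jlE n k)ᵀ * jlG n k * jlE n k

noncomputable def jlPr (n k : ℕ) : Matrix (JLP n (k + 1)) (JLP n (k + 1)) ℝ := 1 - jlQ n k

theorem jlG_transpose (n k : ℕ) : (jlG n k)ᵀ = jlG n k := by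
  rw [jlG, Matrix.transpose_nonsing_inv, Matrix.transpose_mul, Matrix.transpose_transpose]

theorem jlQ_transpose (n k : ℕ) : (jlQ n k)ᵀ = jlQ n k := by
  rw [jlQ, Matrix.transpose_mul, Matrix.transpose_mul, Matrix.transpose_transpose, jlG_transpose,
    Matrix.mul_assoc]

theorem jlQ_idem (n k : ℕ) (hk : 2 * (k + 1) ≤ n) : jlQ n k * jlQ n k = jlQ n k := by
  have h : jlG n k * (jlE n k * (jlE n k)ᵀ) = 1 := Matrix.nonsing_inv_mul _ (jlEE_isUnit n k hk)
  calc jlQ n k * jlQ n k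
      = (jlE n k)ᵀ * (jlG n k * (jlE n k * (jlE n k)ᵀ)) * jlG n k * jlE n k := by
        simp only [jlQ, Matrix.mul_assoc]
    _ = _ := by rw [h, Matrix.mul_one, jlQ]

theorem jlPr_eq (n k : ℕ) (hk : 2 * (k + 1) ≤ n) : (jlPr n k)ᵀ * jlPr n k = jlPr n k := by
  have : (jlPr n k)ᵀ = jlPr n k := by
    rw [jlPr, Matrix.transpose_sub, Matrix.transpose_one, jlQ_transpose]
  rw [this, jlPr, Matrix.mul_sub, Matrix.sub_mul, Matrix.sub_mul, jlQ_idem n k hk]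
  simp

theorem jlE_inv (n k : ℕ) (σ : Equiv.Perm (Fin n)) :
    (jlE n k).submatrix (jle σ) (jle σ) = jlE n k := by
  ext R S
  simp [jlE, jle_val, Finset.map_subset_map]

theorem jlG_inv (n k : ℕ) (σ : Equiv.Perm (Fin n)) :
    (jlG n k).submatrix (jle σ) (jle σ) = jlG n k := by
  rw [jlG, ← Matrix.inv_submatrix_equiv, ← Matrix.submatrix_mul_equiv _ _ _ (jle σ), jlE_inv,
    ← Matrix.transpose_submatrix, jlE_inv]

theorem jlPr_inv (n k : ℕ) (σ : Equiv.Perm (Fin n)) :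
    (jlPr n k).submatrix (jle σ) (jle σ) = jlPr n k := by
  have : (jlQ n k).submatrix (jle σ) (jle σ) = jlQ n k := by
    rw [jlQ, ← Matrix.submatrix_mul_equiv _ _ _ (jle σ), ← Matrix.submatrix_mul_equiv _ _ _ (jle σ),
      jlE_inv, ← Matrix.transpose_submatrix, jlE_inv, jlG_inv]
  rw [jlPr]
  change (1 : Matrix (JLP n (k+1)) (JLP n (k+1)) ℝ).submatrix (jle σ) (jle σ) -
    (jlQ n k).submatrix (jle σ) (jle σ) = _
  rw [this, Matrix.submatrix_one_equiv]

theorem jlPr_inv_apply (n k : ℕ) (σ : Equiv.Perm (Fin n)) (S S' : JLP n (k + 1)) :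
    jlPr n k (jle σ S) (jle σ S') = jlPr n k S S' :=
  congrFun (congrFun (jlPr_inv n k σ) S) S'

theorem jlPr_le (n k : ℕ) (hk : 2 * (k + 1) ≤ n) (σ : Equiv.Perm (Fin n)) (S : JLP n (k + 1)) :
    jlPr n k S (jle σ S) ≤ jlPr n k S S := by
  have h : ∀ S S', jlPr n k S S' = ∑ T, jlPr n k T S * jlPr n k T S' := by
    intro S S'
    conv_lhs => rw [← jlPr_eq n k hk]
    simp [Matrix.mul_apply]
  have h1 := jlPr_inv_apply n k σ S S
  have h2 : 2 * jlPr n k S (jle σ S) ≤ jlPr n k S S + jlPr n k (jle σ S) (jle σ S) := by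
    rw [h S (jle σ S), h S S, h (jle σ S) (jle σ S), Finset.mul_sum, ← Finset.sum_add_distrib]
    refine Finset.sum_le_sum fun T _ => ?_
    nlinarith [sq_nonneg (jlPr n k T S - jlPr n k T (jle σ S))]
  linarith

theorem jl_trace_one (n k : ℕ) (e : Equiv.Perm (JLP n k)) :
    ∑ S : JLP n k, (1 : Matrix (JLP n k) (JLP n k) ℝ) S (e S) =
      (Fintype.card {S : JLP n k // e S = S} : ℝ) := by
  simp only [Matrix.one_apply]
  rw [Finset.sum_boole, Fintype.card_subtype]
  simp only [eq_comm]

theorem jl_trace (n k : ℕ) (hk : 2 * (k + 1) ≤ n) (σ : Equiv.Perm (Fin n)) :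
    ∑ S, jlPr n k S (jle σ S) =
      (Fintype.card {S : JLP n (k + 1) // jle σ S = S} : ℝ) -
        (Fintype.card {S : JLP n k // jle σ S = S} : ℝ) := by
  rw [← jl_trace_one, ← jl_trace_one]
  simp only [jlPr, Matrix.sub_apply, Finset.sum_sub_distrib]
  congr 1
  have h : (jlE n k * (jlE n k)ᵀ) * jlG n k = 1 := Matrix.mul_nonsing_inv _ (jlEE_isUnit n k hk)
  have hE : ∀ R S, jlE n k (jle σ R) (jle σ S) = jlE n k R S := fun R S =>
    congrFun (congrFun (jlE_inv n k σ) R) S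
  calc ∑ S, jlQ n k S (jle σ S)
      = Matrix.trace ((jlE n k)ᵀ * jlG n k * (jlE n k).submatrix id (jle σ)) := by
        simp [Matrix.trace, jlQ, Matrix.mul_apply]
    _ = Matrix.trace ((jlE n k).submatrix id (jle σ) * (jlE n k)ᵀ * jlG n k) := by
        rw [Matrix.trace_mul_comm, Matrix.mul_assoc]
    _ = Matrix.trace ((jlE n k * (jlE n k)ᵀ * jlG n k).submatrix (jle σ).symm id) := by
        congr 1
        have : (jlE n k).submatrix id (jle σ) = (jlE n k).submatrix (jle σ).symm id := by
          ext R S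
          simp only [Matrix.submatrix_apply, id]
          rw [← hE ((jle σ).symm R) S, Equiv.apply_symm_apply]
        rw [this]
        ext R S
        simp [Matrix.mul_apply]
    _ = _ := by
        rw [h]
        simp only [Matrix.trace, Matrix.diag_apply, Matrix.submatrix_apply]
        refine Fintype.sum_equiv (jle σ).symm _ _ fun S => ?_
        rw [Equiv.apply_symm_apply, id]

theorem jl_pointwise (n k : ℕ) (hk : 2 * (k + 1) ≤ n) (A : Matrix (Fin n) (Fin n) ℂ)
    (hA : A.PosSemidef) :
    (∑ σ : Equiv.Perm (Fin n), (((Fintype.card {S : JLP n (k + 1) // jle σ S = S} : ℝ) -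
        (Fintype.card {S : JLP n k // jle σ S = S} : ℝ) : ℝ) : ℂ) * ∏ i, A i (σ i)).re ≤
      ((n.choose (k + 1) : ℝ) - (n.choose k : ℝ)) *
        (∑ σ : Equiv.Perm (Fin n), ∏ i, A i (σ i)).re := by
  have hone : ∀ (l : ℕ) (S : JLP n l), jle 1 S = S := by
    intro l S
    apply Subtype.ext
    rw [jle_val]
    exact Finset.map_refl
  have hdim := jl_trace n k hk 1
  simp only [hone] at hdim
  have hc : ∀ l, Fintype.card {S : JLP n l // True} = n.choose l := by
    intro l
    rw [← jl_card n l]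
    exact Fintype.card_congr (Equiv.subtypeUnivEquiv fun _ => trivial)
  rw [hc, hc] at hdim
  rw [← hdim]
  simp only [← jl_trace n k hk]
  have hS : ∀ S : JLP n (k + 1),
      0 ≤ (∑ σ : Equiv.Perm (Fin n), ((jlPr n k S S - jlPr n k S (jle σ S) : ℝ) : ℂ) *
        ∏ i, A i (σ i)).re := by
    intro S
    have hstab : ∀ x : JLH S.1, jle (jlc x) S = S := by
      intro x
      apply Subtype.ext
      refine Finset.eq_of_subset_of_card_le ?_ (by rw [jle_val, Finset.card_map])
      intro i hi
      rw [jle_val, Finset.mem_map] at hi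
      obtain ⟨j, hj, rfl⟩ := hi
      exact (jlc_mem x j).2 hj
    have hstab' : ∀ x : JLH S.1, jle (jlc x)⁻¹ S = S := by
      intro x
      have h1 := jle_mul (jlc x)⁻¹ (jlc x) S
      rw [inv_mul_cancel, hone, hstab] at h1
      exact h1.symm
    refine jl_biinv A hA S.1 (fun σ => jlPr n k S S - jlPr n k S (jle σ S)) ?_ ?_
    · intro σ
      have := jlPr_le n k hk σ S
      exact sub_nonneg.2 this
    · intro x y σ
      change jlPr n k S S - jlPr n k S (jle (jlc y * σ * (jlc x)⁻¹) S) =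
        jlPr n k S S - jlPr n k S (jle σ S)
      rw [jle_mul, jle_mul, hstab']
      have := jlPr_inv_apply n k (jlc y) S (jle σ S)
      rw [hstab] at this
      rw [this]
  have hsum := Finset.sum_nonneg fun (S : JLP n (k + 1)) (_ : S ∈ Finset.univ) => hS S
  rw [← Complex.re_sum] at hsum
  rw [← Complex.re_ofReal_mul, ← sub_nonneg, ← Complex.sub_re]
  refine le_trans hsum (le_of_eq (congrArg Complex.re ?_))
  symm
  rw [Finset.sum_comm, Finset.mul_sum, ← Finset.sum_sub_distrib]
  refine Finset.sum_congr rfl fun σ _ => ?_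
  rw [← Finset.sum_mul, ← sub_mul]
  congr 1
  push_cast
  rw [Finset.sum_sub_distrib]

theorem jl_inducedChar (n m k : ℕ) (hn : 2 ≤ n) (hmk : m + k = n) (σ : Equiv.Perm (Fin n)) :
    inducedChar n (fun i : Fin n => if (i : ℕ) = 0 then m else if (i : ℕ) = 1 then k else 0) σ =
      Fintype.card {S : JLP n k // jle σ S = S} := by
  classical
  let z : Fin n := ⟨0, by omega⟩
  let o : Fin n := ⟨1, by omega⟩
  have hzo : z ≠ o := by simp [z, o, Fin.ext_iff]
  unfold inducedChar
  rw [← Nat.card_eq_fintype_card]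
  have key : ∀ f : Fin n → Fin n, (∀ j : Fin n, Nat.card {i // f i = j} =
      if (j : ℕ) = 0 then m else if (j : ℕ) = 1 then k else 0) → ∀ i, f i ≠ o → f i = z := by
    intro f hf i hi
    by_contra hz
    have h := hf (f i)
    have h0 : ¬ ((f i : Fin n) : ℕ) = 0 := fun h => hz (Fin.ext h)
    have h1 : ¬ ((f i : Fin n) : ℕ) = 1 := fun h => hi (Fin.ext h)
    rw [if_neg h0, if_neg h1, Nat.card_eq_fintype_card, Fintype.card_eq_zero_iff] at h
    exact h.elim ⟨i, rfl⟩
  refine Nat.card_congr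
    { toFun := fun f => ⟨⟨Finset.univ.filter fun i => f.1 i = o, ?_⟩, ?_⟩
      invFun := fun S => ⟨fun i => if i ∈ S.1.1 then o else z, ?_, ?_⟩
      left_inv := ?_
      right_inv := ?_ }
  · have := f.2.1 o
    simp only [o, one_ne_zero, if_false, if_true] at this
    rw [Nat.card_eq_fintype_card, Fintype.card_subtype] at this
    exact this
  · apply Subtype.ext
    ext i
    simp only [jle_val, Finset.mem_map, Finset.mem_filter, Finset.mem_univ, true_and,
      Equiv.coe_toEmbedding]
    have h := fun j => congrFun f.2.2 j
    simp only [Function.comp_apply] at h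
    constructor
    · rintro ⟨j, hj, rfl⟩; rw [h]; exact hj
    · intro hi; exact ⟨σ.symm i, by rw [← h]; simpa using hi, by simp⟩
  · intro j
    rw [Nat.card_eq_fintype_card, Fintype.card_subtype]
    beta_reduce
    by_cases h0 : (j : ℕ) = 0
    · have hj : j = z := Fin.ext h0
      rw [if_pos h0, hj]
      have : (Finset.univ.filter fun i => (if i ∈ S.1.1 then o else z) = z) = S.1.1ᶜ := by
        ext i
        by_cases hi : i ∈ S.1.1 <;> simp [hi, hzo.symm]
      rw [this, Finset.card_compl, S.1.2, Fintype.card_fin]; omega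
    · rw [if_neg h0]
      by_cases h1 : (j : ℕ) = 1
      · have hj : j = o := Fin.ext h1
        rw [if_pos h1, hj]
        have : (Finset.univ.filter fun i => (if i ∈ S.1.1 then o else z) = o) = S.1.1 := by
          ext i
          by_cases hi : i ∈ S.1.1 <;> simp [hi, hzo]
        rw [this, S.1.2]
      · rw [if_neg h1, Finset.card_eq_zero, Finset.filter_eq_empty_iff]
        intro i _ h
        split_ifs at h
        · exact h1 (by rw [← h])
        · exact h0 (by rw [← h])
  · have hS : S.1.1.map σ.toEmbedding = S.1.1 := congrArg Subtype.val S.2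
    funext i
    have : σ i ∈ S.1.1 ↔ i ∈ S.1.1 := by
      conv_lhs => rw [← hS]
      simp
    simp only [Function.comp_apply, this]
  · intro f
    apply Subtype.ext
    funext i
    by_cases hi : f.1 i = o
    · simp [hi]
    · simp [key f.1 f.2.1 i hi, hzo]
  · intro S
    apply Subtype.ext
    apply Subtype.ext
    ext i
    by_cases hi : i ∈ S.1.1 <;> simp [hi, hzo]

theorem jl_dInduced_sub (n k m : ℕ) (hk : 2 * (k + 1) ≤ n) (hm : m + (k + 1) = n)
    (A : Matrix (Fin n) (Fin n) ℂ) (hA : A.PosSemidef) :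
    (dInduced (fun i : Fin n => if (i : ℕ) = 0 then m else if (i : ℕ) = 1 then k + 1 else 0) A).re -
    (dInduced (fun i : Fin n => if (i : ℕ) = 0 then m + 1 else if (i : ℕ) = 1 then k else 0) A).re ≤
      ((n.choose (k + 1) : ℝ) - (n.choose k : ℝ)) *
        (∑ σ : Equiv.Perm (Fin n), ∏ i, A i (σ i)).re := by
  refine le_trans (le_of_eq ?_) (jl_pointwise n k hk A hA)
  rw [← Complex.sub_re]
  congr 1
  unfold dInduced
  rw [← Finset.sum_sub_distrib]
  refine Finset.sum_congr rfl fun σ _ => ?_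
  rw [jl_inducedChar n m (k + 1) (by omega) hm, jl_inducedChar n (m + 1) k (by omega) (by omega)]
  push_cast
  ring

theorem jl_integrable (n : ℕ) (μ : Measure (Matrix.unitaryGroup (Fin n) ℂ))
    [IsProbabilityMeasure μ] (A : Matrix (Fin n) (Fin n) ℂ) (c : Equiv.Perm (Fin n) → ℂ) :
    Integrable (fun u => ∑ σ : Equiv.Perm (Fin n), c σ * ∏ i, (conjU A u) i (σ i)) μ := by
  refine integrable_finsetSum _ fun σ _ => Integrable.const_mul ?_ _
  have hcont : ∀ i j, Continuous fun u : Matrix.unitaryGroup (Fin n) ℂ => (conjU A u) i j := by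
    intro i j
    unfold conjU
    have h1 : Continuous fun u : Matrix.unitaryGroup (Fin n) ℂ => (u : Matrix (Fin n) (Fin n) ℂ) :=
      continuous_subtype_val
    exact ((h1.mul continuous_const).mul h1.star).matrix_elem i j
  have hb : ∀ i j, ∀ u : Matrix.unitaryGroup (Fin n) ℂ,
      ‖(conjU A u) i j‖ ≤ ∑ l, ∑ m, ‖A m l‖ := by
    intro i j u
    unfold conjU
    rw [Matrix.mul_apply]
    refine (norm_sum_le _ _).trans (Finset.sum_le_sum fun l _ => ?_)
    rw [norm_mul]
    have hu := fun i j => entry_norm_bound_of_unitary u.2 i j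
    have h1 : ‖(star (u : Matrix (Fin n) (Fin n) ℂ)) l j‖ ≤ 1 := by
      rw [Matrix.star_apply, norm_star]; exact hu _ _
    refine (mul_le_of_le_one_right (norm_nonneg _) h1).trans ?_
    rw [Matrix.mul_apply]
    refine (norm_sum_le _ _).trans (Finset.sum_le_sum fun m _ => ?_)
    rw [norm_mul]
    exact mul_le_of_le_one_left (norm_nonneg _) (hu _ _)
  refine Integrable.of_bound (C := ∏ i : Fin n, ∑ l, ∑ m, ‖A m l‖) ?_ (Filter.Eventually.of_forall ?_)
  · exact (continuous_finsetProd _ fun i _ => hcont i (σ i)).aestronglyMeasurable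
  · intro u
    rw [norm_prod]
    exact Finset.prod_le_prod (fun _ _ => norm_nonneg _) fun i _ => hb _ _ u

theorem stmt7 (n : ℕ) (hn : 2 ≤ n)
    (μ : Measure (Matrix.unitaryGroup (Fin n) ℂ))
    [μ.IsMulLeftInvariant] [IsProbabilityMeasure μ]
    (A : Matrix (Fin n) (Fin n) ℂ) (hA : A.PosSemidef)
    (η₁ η₂ : ℕ) (h12 : η₂ ≤ η₁) (h2 : 1 ≤ η₂) (hsum : η₁ + η₂ = n) :
    ((∫ u, dInduced (fun i : Fin n => if (i : ℕ) = 0 then η₁ else if (i : ℕ) = 1 then η₂ else 0)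
          (conjU A u) ∂μ).re -
        (∫ u, dInduced (fun i : Fin n => if (i : ℕ) = 0 then η₁ + 1 else if (i : ℕ) = 1 then η₂ - 1 else 0)
          (conjU A u) ∂μ).re) /
        ((n.choose η₂ : ℝ) - (n.choose (η₂ - 1) : ℝ)) ≤
      (∫ u, ∑ σ : Equiv.Perm (Fin n), ∏ i, (conjU A u) i (σ i) ∂μ).re := by
  obtain ⟨k, rfl⟩ : ∃ k, η₂ = k + 1 := ⟨η₂ - 1, by omega⟩
  have hk : 2 * (k + 1) ≤ n := by omega
  rw [Nat.add_sub_cancel]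
  have hpos : (0 : ℝ) < (n.choose (k + 1) : ℝ) - (n.choose k : ℝ) := by
    have h1 := Nat.choose_succ_right_eq n k
    have h2 : 0 < n.choose k := Nat.choose_pos (by omega)
    have h3 : n.choose k < n.choose (k + 1) := by
      by_contra hcon
      push Not at hcon
      have h4 : n.choose (k + 1) * (k + 1) ≤ n.choose k * (k + 1) := Nat.mul_le_mul_right _ hcon
      have h5 : n.choose k * (k + 1) < n.choose k * (n - k) :=
        Nat.mul_lt_mul_of_pos_left (by omega) h2
      omega
    have : (n.choose k : ℝ) < n.choose (k + 1) := by exact_mod_cast h3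
    linarith
  rw [div_le_iff₀ hpos]
  have i1 : ∀ γ : Fin n → ℕ, Integrable (fun u => dInduced γ (conjU A u)) μ :=
    fun γ => jl_integrable n μ A fun σ => (inducedChar n γ σ : ℂ)
  have i2 : Integrable (fun u => ∑ σ : Equiv.Perm (Fin n), ∏ i, (conjU A u) i (σ i)) μ := by
    simpa using jl_integrable n μ A fun _ => 1
  have hre : ∀ f : Matrix.unitaryGroup (Fin n) ℂ → ℂ, Integrable f μ →
      (∫ u, f u ∂μ).re = ∫ u, (f u).re ∂μ := fun f hf => (integral_re hf).symm
  have i3 : ∀ f : Matrix.unitaryGroup (Fin n) ℂ → ℂ, Integrable f μ →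
      Integrable (fun u => (f u).re) μ := fun f hf => hf.re
  rw [hre _ (i1 _), hre _ (i1 _), hre _ i2, ← integral_sub (i3 _ (i1 _)) (i3 _ (i1 _)),
    mul_comm, ← integral_const_mul]
  refine integral_mono ((i3 _ (i1 _)).sub (i3 _ (i1 _))) ((i3 _ i2).const_mul _) fun u => ?_
  exact jl_dInduced_sub n k η₁ hk hsum (conjU A u) (hA.mul_mul_conjTranspose_same _)
end

section
/- Let n ≥ 1 and 1 ≤ k ≤ n, and let p be a polynomial in n² variables with complex coefficients, viewed as a polynomial function of the entries of an n×n complex matrix. If p(A) = 0 for every positive semidefinite n×n complex matrix A of rank at most k, then p(A) = 0 for every n×n complex matrix A of rank at most k. (Zariski density of positive semidefinite matrices of bounded rank, used in the proof of Theorem 6.) -/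
open scoped ComplexOrder

theorem stmt8_factor {n : ℕ} (A : Matrix (Fin n) (Fin n) ℂ) :
    ∃ B D C : Matrix (Fin n) (Fin n) ℂ, A = B * D * C ∧ D * D.conjTranspose = D ∧
      D.rank ≤ A.rank := by
  obtain ⟨V, U, e, hV, hU, hD⟩ := Matrix.exists_rank_normal_form A
  obtain ⟨V, rfl⟩ := hV
  obtain ⟨U, rfl⟩ := hU
  refine ⟨(V⁻¹ : _ˣ).val, V.val * A * U.val, (U⁻¹ : _ˣ).val, ?_, ?_, ?_⟩
  · simp [mul_assoc]
  · rw [hD, Matrix.conjTranspose_submatrix, Matrix.submatrix_mul_equiv,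
      Matrix.fromBlocks_conjTranspose, Matrix.fromBlocks_multiply]
    simp
  · exact (Matrix.rank_mul_le_left _ _).trans (Matrix.rank_mul_le_right _ _)

theorem stmt8 (n k : ℕ) (hn : 1 ≤ n) (hk1 : 1 ≤ k) (hkn : k ≤ n)
    (p : MvPolynomial (Fin n × Fin n) ℂ)
    (h : ∀ A : Matrix (Fin n) (Fin n) ℂ, A.PosSemidef → A.rank ≤ k →
      MvPolynomial.eval (fun q => A q.1 q.2) p = 0) :
    ∀ A : Matrix (Fin n) (Fin n) ℂ, A.rank ≤ k →
      MvPolynomial.eval (fun q => A q.1 q.2) p = 0 := by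
  intro A hA
  obtain ⟨B, D, C, hBC, hDD, hDr⟩ := stmt8_factor A
  -- generic product `(X + iY) D (Xᵀ - iYᵀ)` as a polynomial in the entries of `X` and `Y`
  let F : Fin n × Fin n → MvPolynomial (Bool × Fin n × Fin n) ℂ := fun q =>
    ∑ b, (∑ a, (MvPolynomial.X (true, q.1, a) + MvPolynomial.C Complex.I *
      MvPolynomial.X (false, q.1, a)) * MvPolynomial.C (D a b)) *
      (MvPolynomial.X (true, q.2, b) - MvPolynomial.C Complex.I * MvPolynomial.X (false, q.2, b))
  have hF : ∀ x : Bool × Fin n × Fin n → ℂ, MvPolynomial.eval x (MvPolynomial.bind₁ F p) =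
      MvPolynomial.eval (fun q =>
        ((Matrix.of fun i j => x (true, i, j) + Complex.I * x (false, i, j)) * D *
          (Matrix.of fun i j => x (true, j, i) - Complex.I * x (false, j, i)) :
          Matrix (Fin n) (Fin n) ℂ) q.1 q.2) p := by
    intro x
    rw [← MvPolynomial.coe_aeval_eq_eval, RingHom.coe_coe, MvPolynomial.aeval_bind₁,
      ← MvPolynomial.coe_aeval_eq_eval, RingHom.coe_coe]
    congr 2
    funext q
    simp [F, Matrix.mul_apply]
  have hzero : MvPolynomial.bind₁ F p = 0 := by
    refine MvPolynomial.funext_set (fun _ => Set.range (Complex.ofReal))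
      (fun _ => Set.infinite_range_of_injective Complex.ofReal_injective) ?_
    intro x hx
    have hx' : ∀ i, (starRingEnd ℂ) (x i) = x i := by
      intro i
      obtain ⟨r, hr⟩ := hx i (Set.mem_univ _)
      rw [← hr, Complex.conj_ofReal]
    rw [hF, map_zero]
    set M : Matrix (Fin n) (Fin n) ℂ :=
      Matrix.of fun i j => x (true, i, j) + Complex.I * x (false, i, j) with hM
    have hMH : (Matrix.of fun i j => x (true, j, i) - Complex.I * x (false, j, i)) =
        M.conjTranspose := by
      ext i j
      simp [hM, Matrix.conjTranspose_apply, hx', sub_eq_add_neg]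
    rw [hMH]
    apply h
    · have : M * D * M.conjTranspose = (M * D) * (M * D).conjTranspose := by
        rw [Matrix.conjTranspose_mul, ← mul_assoc, mul_assoc M D D.conjTranspose, hDD]
      rw [this]
      exact Matrix.posSemidef_self_mul_conjTranspose _
    · exact (Matrix.rank_mul_le_left _ _).trans
        ((Matrix.rank_mul_le_right _ _).trans (hDr.trans hA))
  have key := hF (fun t => if t.1 then (B t.2.1 t.2.2 + C t.2.2 t.2.1) / 2
    else -Complex.I * (B t.2.1 t.2.2 - C t.2.2 t.2.1) / 2)
  rw [hzero, map_zero] at key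
  have hI : Complex.I * Complex.I = -1 := Complex.I_mul_I
  rw [hBC]
  refine Eq.trans ?_ key.symm
  congr 2
  funext q
  refine congrFun (congrFun (congrArg₂ (fun P Q : Matrix (Fin n) (Fin n) ℂ => P * D * Q)
    ?_ ?_) q.1) q.2
  · ext i j
    simp
    linear_combination (B i j - C j i) / 2 * hI
  · ext i j
    simp
    linear_combination -(B j i - C i j) / 2 * hI
end

section
/- Let n ≥ 1 and let A be an n×n complex matrix. Then ∫_{U(n)} per(u A u*) du = ∫_{U(n)} ((u A u*)_{11})^n du, where the integrals are over the unitary group U(n) with respect to its Haar probability measure and per denotes the permanent. -/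
open MeasureTheory Matrix
open scoped ComplexOrder

/-- the weights of the one-variable extraction functional -/
noncomputable def exW (m : ℕ) : Option (Fin m) → ℂ
  | none => -1
  | some _ => (m : ℂ)⁻¹

/-- the nodes of the one-variable extraction functional -/
noncomputable def exZ (m : ℕ) : Option (Fin m) → ℂ
  | none => 0
  | some k => (Complex.exp (2 * Real.pi * Complex.I / m)) ^ (k : ℕ)

lemma ex_sum (m : ℕ) (a b : ℕ) (ha : a < m) (hb : b < m) :
    ∑ k, exW m k * ((star (exZ m k)) ^ a * (exZ m k) ^ b) = if a = b ∧ a ≠ 0 then 1 else 0 := by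
  have hm : m ≠ 0 := by omega
  have hmc : (m : ℂ) ≠ 0 := by exact_mod_cast hm
  have hζ := Complex.isPrimitiveRoot_exp m hm
  rw [Fintype.sum_option]
  simp only [exW, exZ]
  set ζ := Complex.exp (2 * Real.pi * Complex.I / m) with hz
  have hn : ‖ζ‖ = 1 := Complex.norm_eq_one_of_pow_eq_one hζ.pow_eq_one hm
  have hs : star ζ * ζ = 1 := by
    have := Complex.conj_mul' ζ
    rw [hn] at this
    simpa using this
  have h1 : ∀ k : Fin m, (m : ℂ)⁻¹ * ((star (ζ ^ (k : ℕ))) ^ a * (ζ ^ (k : ℕ)) ^ b)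
      = (m : ℂ)⁻¹ * ((star ζ) ^ a * ζ ^ b) ^ (k : ℕ) := by
    intro k
    rw [star_pow, mul_pow]; ring
  rw [Finset.sum_congr rfl (fun k _ => h1 k), ← Finset.mul_sum,
    Fin.sum_univ_eq_sum_range (fun k => ((star ζ) ^ a * ζ ^ b) ^ k) m]
  by_cases hab : a = b
  · subst hab
    rw [← mul_pow (star ζ), hs]
    by_cases h0 : a = 0
    · subst h0; simp [hmc]
    · simp [h0, hmc]
  · have hr : (star ζ) ^ a * ζ ^ b ≠ 1 := by
      intro h
      apply hab
      apply hζ.pow_inj ha hb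
      calc ζ ^ a = ζ ^ a * ((star ζ) ^ a * ζ ^ b) := by rw [h, mul_one]
        _ = (star ζ * ζ) ^ a * ζ ^ b := by rw [mul_pow]; ring
        _ = ζ ^ b := by rw [hs]; simp
    have hr' : ((star ζ) ^ a * ζ ^ b) ^ m = 1 := by
      rw [mul_pow, ← pow_mul, ← pow_mul, mul_comm a, mul_comm b, pow_mul, pow_mul, ← star_pow,
        hζ.pow_eq_one]; simp
    rw [geom_sum_eq hr, hr']
    simp only [hab, false_and, if_false, sub_self, zero_div, mul_zero, add_zero]
    have : a ≠ 0 ∨ b ≠ 0 := by omega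
    rcases this with h | h <;> simp [h]

/-- the sesquilinear form -/
noncomputable def qf {n : ℕ} (B : Matrix (Fin n) (Fin n) ℂ) (x : Fin n → ℂ) : ℂ :=
  ∑ i, ∑ j, star (x i) * x j * B i j

lemma prod_fib {n : ℕ} (α : Fin n → Fin n) (f : Fin n → ℂ) :
    ∏ k, f (α k) = ∏ i, f i ^ (Finset.univ.filter (fun k => α k = i)).card := by
  rw [← Finset.prod_fiberwise Finset.univ α]
  refine Finset.prod_congr rfl fun i _ => ?_
  rw [← Finset.prod_const]
  refine Finset.prod_congr rfl fun k hk => ?_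
  rw [(Finset.mem_filter.1 hk).2]

lemma qf_pow {n : ℕ} (B : Matrix (Fin n) (Fin n) ℂ) (x : Fin n → ℂ) :
    qf B x ^ n = ∑ α : Fin n → Fin n, ∑ β : Fin n → Fin n,
      (∏ i, ((star (x i)) ^ (Finset.univ.filter (fun k => α k = i)).card *
        (x i) ^ (Finset.univ.filter (fun k => β k = i)).card)) * ∏ k, B (α k) (β k) := by
  unfold qf
  rw [Fintype.sum_pow]
  refine Finset.sum_congr rfl fun α _ => ?_
  rw [Fintype.prod_sum]
  refine Finset.sum_congr rfl fun β _ => ?_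
  rw [Finset.prod_mul_distrib, Finset.prod_mul_distrib, Finset.prod_mul_distrib,
    prod_fib α (fun i => star (x i)), prod_fib β x]

lemma sum_bij_fun {n : ℕ} (g : (Fin n → Fin n) → ℂ) :
    ∑ α : Fin n → Fin n, (if Function.Bijective α then g α else 0)
      = ∑ σ : Equiv.Perm (Fin n), g σ := by
  symm
  apply Finset.sum_of_injOn (fun σ : Equiv.Perm (Fin n) => (σ : Fin n → Fin n))
  · intro σ _ τ _ h
    exact DFunLike.coe_injective h
  · intro σ _; simp
  · intro α _ h
    rw [if_neg]
    intro hb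
    exact h ⟨Equiv.ofBijective α hb, by simp, rfl⟩
  · intro σ _
    rw [if_pos σ.bijective]

lemma cond_iff {n : ℕ} (α β : Fin n → Fin n) :
    (∀ i, (Finset.univ.filter (fun k => α k = i)).card = (Finset.univ.filter (fun k => β k = i)).card
      ∧ (Finset.univ.filter (fun k => α k = i)).card ≠ 0) ↔
    (Function.Bijective α ∧ Function.Bijective β) := by
  constructor
  · intro h
    have key : ∀ γ : Fin n → Fin n,
        (∀ i, (Finset.univ.filter (fun k => γ k = i)).card ≠ 0) → Function.Bijective γ := by
      intro γ hγ
      apply Finite.surjective_iff_bijective.1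
      intro i
      obtain ⟨k, hk⟩ := Finset.card_ne_zero.1 (hγ i)
      exact ⟨k, (Finset.mem_filter.1 hk).2⟩
    exact ⟨key α fun i => (h i).2, key β fun i => (h i).1 ▸ (h i).2⟩
  · rintro ⟨ha, hb⟩ i
    have key : ∀ γ : Fin n → Fin n, Function.Bijective γ →
        (Finset.univ.filter (fun k => γ k = i)).card = 1 := by
      intro γ hγ
      obtain ⟨k, hk⟩ := hγ.2 i
      rw [Finset.card_eq_one]
      refine ⟨k, ?_⟩
      ext l
      simp only [Finset.mem_filter, Finset.mem_univ, true_and, Finset.mem_singleton]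
      constructor
      · intro h; exact hγ.1 (h.trans hk.symm)
      · rintro rfl; exact hk
    rw [key α ha, key β hb]; simp

lemma extract {n : ℕ} (B : Matrix (Fin n) (Fin n) ℂ) :
    ∑ z : Fin n → Option (Fin (n + 1)), (∏ i, exW (n + 1) (z i)) *
        qf B (fun i => exZ (n + 1) (z i)) ^ n
      = (n.factorial : ℂ) * ∑ σ : Equiv.Perm (Fin n), ∏ i, B i (σ i) := by
  simp only [qf_pow, Finset.mul_sum]
  rw [Finset.sum_comm]
  have h1 : ∀ α : Fin n → Fin n, ∑ z : Fin n → Option (Fin (n + 1)), ∑ β : Fin n → Fin n,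
      (∏ i, exW (n + 1) (z i)) * ((∏ i, ((star (exZ (n + 1) (z i))) ^
          (Finset.univ.filter (fun k => α k = i)).card *
        (exZ (n + 1) (z i)) ^ (Finset.univ.filter (fun k => β k = i)).card)) * ∏ k, B (α k) (β k))
      = if Function.Bijective α then ∑ σ : Equiv.Perm (Fin n), ∏ k, B (α k) (σ k) else 0 := by
    intro α
    rw [Finset.sum_comm]
    have h2 : ∀ β : Fin n → Fin n, ∑ z : Fin n → Option (Fin (n + 1)),
      (∏ i, exW (n + 1) (z i)) * ((∏ i, ((star (exZ (n + 1) (z i))) ^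
          (Finset.univ.filter (fun k => α k = i)).card *
        (exZ (n + 1) (z i)) ^ (Finset.univ.filter (fun k => β k = i)).card)) * ∏ k, B (α k) (β k))
        = if Function.Bijective β then
          (if Function.Bijective α then ∏ k, B (α k) (β k) else 0) else 0 := by
      intro β
      simp only [← mul_assoc]
      rw [← Finset.sum_mul]
      simp only [← Finset.prod_mul_distrib, mul_assoc]
      rw [← Fintype.prod_sum (fun i k => exW (n + 1) k * ((star (exZ (n + 1) k)) ^
          (Finset.univ.filter (fun k => α k = i)).card *
        (exZ (n + 1) k) ^ (Finset.univ.filter (fun k => β k = i)).card))]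
      have hc : ∀ (γ : Fin n → Fin n) i, (Finset.univ.filter (fun k => γ k = i)).card < n + 1 := by
        intro γ i
        have := Finset.card_filter_le (Finset.univ : Finset (Fin n)) (fun k => γ k = i)
        simp at this
        omega
      rw [Finset.prod_congr rfl (fun i _ => ex_sum (n + 1) _ _ (hc α i) (hc β i))]
      by_cases hc : (Function.Bijective α ∧ Function.Bijective β)
      · rw [if_pos hc.1, if_pos hc.2]
        rw [Finset.prod_congr rfl (fun i _ => if_pos ((cond_iff α β).2 hc i))]
        simp
      · have := mt (cond_iff α β).1 hc
        push Not at this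
        have h3 : ∃ i, ¬ ((Finset.univ.filter (fun k => α k = i)).card =
          (Finset.univ.filter (fun k => β k = i)).card
          ∧ (Finset.univ.filter (fun k => α k = i)).card ≠ 0) := by
          by_contra hh
          push Not at hh
          exact hc ((cond_iff α β).1 hh)
        obtain ⟨i, hi⟩ := h3
        rw [Finset.prod_eq_zero (Finset.mem_univ i) (if_neg hi), zero_mul]
        split_ifs <;> tauto
    rw [Finset.sum_congr rfl (fun β _ => h2 β), sum_bij_fun]
    split_ifs <;> simp
  have h0 : ∀ σ : Equiv.Perm (Fin n), ∑ τ : Equiv.Perm (Fin n), ∏ k, B (σ k) (τ k)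
      = ∑ τ : Equiv.Perm (Fin n), ∏ k, B k (τ k) := by
    intro σ
    rw [← Equiv.sum_comp (Equiv.mulRight σ)]
    refine Finset.sum_congr rfl fun τ _ => ?_
    rw [← Equiv.prod_comp σ (fun k => B k (τ k))]
    simp
  rw [Finset.sum_congr rfl (fun α _ => h1 α), sum_bij_fun,
    Finset.sum_congr rfl (fun α _ => h0 α)]
  simp [Finset.mul_sum, Fintype.card_perm]

instance compactU {n : ℕ} : CompactSpace (Matrix.unitaryGroup (Fin n) ℂ) := by
  apply isCompact_iff_compactSpace.1
  have hK : IsCompact (Set.univ.pi fun _ : Fin n => Set.univ.pi fun _ : Fin n =>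
      Metric.closedBall (0 : ℂ) 1) :=
    isCompact_univ_pi fun _ => isCompact_univ_pi fun _ => isCompact_closedBall _ _
  refine IsCompact.of_isClosed_subset hK ?_ ?_
  · have : ((Matrix.unitaryGroup (Fin n) ℂ : Set (Matrix (Fin n) (Fin n) ℂ)))
        = {A | A * star A = 1} := by
      ext A; exact Matrix.mem_unitaryGroup_iff
    change IsClosed ((Matrix.unitaryGroup (Fin n) ℂ : Set (Matrix (Fin n) (Fin n) ℂ)))
    rw [this]
    exact isClosed_eq (continuous_id.mul continuous_star) continuous_const
  · intro A hA i _ j _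
    simpa using entry_norm_bound_of_unitary hA i j

lemma cont_entry {n : ℕ} (A : Matrix (Fin n) (Fin n) ℂ) (i j : Fin n) :
    Continuous fun u => conjU A u i j := by
  unfold conjU
  have : Continuous fun u : Matrix.unitaryGroup (Fin n) ℂ =>
    (u : Matrix (Fin n) (Fin n) ℂ) * A * star (u : Matrix (Fin n) (Fin n) ℂ) :=
    (continuous_subtype_val.mul continuous_const).mul continuous_subtype_val.star
  exact (continuous_apply_apply i j).comp this

lemma integ {n : ℕ} (μ : Measure (Matrix.unitaryGroup (Fin n) ℂ)) [IsProbabilityMeasure μ]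
    (f : Matrix.unitaryGroup (Fin n) ℂ → ℂ) (hf : Continuous f) : Integrable f μ :=
  hf.integrable_of_hasCompactSupport (HasCompactSupport.of_compactSpace f)

lemma exists_row {n : ℕ} (hn : 1 ≤ n) (v : EuclideanSpace ℂ (Fin n)) (hv : ‖v‖ = 1) :
    ∃ g : Matrix.unitaryGroup (Fin n) ℂ, ∀ j, (g : Matrix (Fin n) (Fin n) ℂ) ⟨0, hn⟩ j = star (v j) := by
  have ho : Orthonormal ℂ (({⟨0, hn⟩} : Set (Fin n)).domRestrict (fun _ : Fin n => v)) := by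
    constructor
    · intro i; simpa using hv
    · intro i j hij
      exact absurd (Subsingleton.elim i j) hij
  obtain ⟨b, hb⟩ := ho.exists_orthonormalBasis_extension_of_card_eq (by simp)
  have hU := (EuclideanSpace.basisFun (Fin n) ℂ).toMatrix_orthonormalBasis_mem_unitary b
  refine ⟨star ⟨_, hU⟩, fun j => ?_⟩
  have := hb ⟨0, hn⟩ rfl
  simp [Matrix.star_apply, Module.Basis.toMatrix_apply, this]

lemma conjU_mul_entry {n : ℕ} (hn : 1 ≤ n) (A : Matrix (Fin n) (Fin n) ℂ)
    (g u : Matrix.unitaryGroup (Fin n) ℂ) (v : Fin n → ℂ)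
    (hg : ∀ j, (g : Matrix (Fin n) (Fin n) ℂ) ⟨0, hn⟩ j = star (v j)) :
    conjU A (g * u) ⟨0, hn⟩ ⟨0, hn⟩ = qf (conjU A u) v := by
  have : conjU A (g * u) = (g : Matrix (Fin n) (Fin n) ℂ) * conjU A u *
      star (g : Matrix (Fin n) (Fin n) ℂ) := by
    simp [conjU, mul_assoc]
  rw [this, Matrix.mul_apply]
  simp only [Matrix.mul_apply, Matrix.star_apply, hg, star_star, Finset.sum_mul, qf]
  rw [Finset.sum_comm]
  refine Finset.sum_congr rfl fun i _ => Finset.sum_congr rfl fun j _ => by ring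

lemma qf_smul {n : ℕ} (B : Matrix (Fin n) (Fin n) ℂ) (r : ℝ) (x : Fin n → ℂ) :
    qf B (fun i => (r : ℂ) * x i) = (r : ℂ) ^ 2 * qf B x := by
  simp only [qf, Finset.mul_sum]
  refine Finset.sum_congr rfl fun i _ => Finset.sum_congr rfl fun j _ => ?_
  simp; ring

lemma qf_one {n : ℕ} (x : EuclideanSpace ℂ (Fin n)) :
    qf (1 : Matrix (Fin n) (Fin n) ℂ) x = ((‖x‖ : ℝ) : ℂ) ^ 2 := by
  have h : ‖x‖ ^ 2 = ∑ i, ‖x i‖ ^ 2 := EuclideanSpace.norm_sq_eq x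
  rw [← Complex.ofReal_pow, h]
  simp [qf, Matrix.one_apply, Complex.conj_mul']

lemma int_qf {n : ℕ} (hn : 1 ≤ n)
    (μ : Measure (Matrix.unitaryGroup (Fin n) ℂ)) [μ.IsMulLeftInvariant]
    (A : Matrix (Fin n) (Fin n) ℂ) (x : Fin n → ℂ) :
    ∫ u, qf (conjU A u) x ^ n ∂μ =
      qf 1 x ^ n * ∫ u, ((conjU A u) ⟨0, hn⟩ ⟨0, hn⟩) ^ n ∂μ := by
  by_cases hx : x = 0
  · subst hx
    have h0 : ∀ B : Matrix (Fin n) (Fin n) ℂ, qf B 0 = 0 := fun B => by simp [qf]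
    simp [h0, show n ≠ 0 by omega]
  · set y : EuclideanSpace ℂ (Fin n) := WithLp.toLp 2 x with hy
    have hy0 : y ≠ 0 := by
      intro h; apply hx; ext i
      have := congrArg (fun w : EuclideanSpace ℂ (Fin n) => w i) h
      simpa [hy] using this
    have hny : ‖y‖ ≠ 0 := norm_ne_zero_iff.2 hy0
    set v : EuclideanSpace ℂ (Fin n) := ((‖y‖⁻¹ : ℝ) : ℂ) • y with hvd
    have hv : ‖v‖ = 1 := by
      rw [hvd, norm_smul]; simp [hny]
    have hxv : x = fun i => ((‖y‖ : ℝ) : ℂ) * v i := by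
      ext i
      have : ((‖y‖ : ℝ) : ℂ) ≠ 0 := by exact_mod_cast hny
      have hvi : v i = ((‖y‖ : ℝ) : ℂ)⁻¹ * x i := by simp [hvd, hy]
      rw [hvi, mul_inv_cancel_left₀ this]
    obtain ⟨g, hg⟩ := exists_row hn v hv
    have h1 : qf 1 x = ((‖y‖ : ℝ) : ℂ) ^ 2 := qf_one y
    have h2 : ∀ u, qf (conjU A u) x =
        ((‖y‖ : ℝ) : ℂ) ^ 2 * conjU A (g * u) ⟨0, hn⟩ ⟨0, hn⟩ := by
      intro u
      rw [conjU_mul_entry hn A g u v hg, ← qf_smul, ← hxv]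
    simp only [h2, mul_pow, h1]
    rw [integral_const_mul,
      integral_mul_left_eq_self (fun u => (conjU A u ⟨0, hn⟩ ⟨0, hn⟩) ^ n) g]

theorem stmt9 (n : ℕ) (hn : 1 ≤ n)
    (μ : Measure (Matrix.unitaryGroup (Fin n) ℂ))
    [μ.IsMulLeftInvariant] [IsProbabilityMeasure μ]
    (A : Matrix (Fin n) (Fin n) ℂ) :
    ∫ u, (∑ σ : Equiv.Perm (Fin n), ∏ i, (conjU A u) i (σ i)) ∂μ =
      ∫ u, ((conjU A u) ⟨0, hn⟩ ⟨0, hn⟩) ^ n ∂μ := by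
  have hf : (n.factorial : ℂ) ≠ 0 := by exact_mod_cast n.factorial_ne_zero
  apply mul_left_cancel₀ hf
  rw [← integral_const_mul]
  simp only [← extract]
  rw [integral_finsetSum]
  · simp only [integral_const_mul, int_qf hn μ A, ← mul_assoc]
    rw [← Finset.sum_mul, extract]
    congr 1
    have : ∑ σ : Equiv.Perm (Fin n), ∏ i, (1 : Matrix (Fin n) (Fin n) ℂ) i (σ i) = 1 := by
      have h := Matrix.permanent_one (n := Fin n) (R := ℂ)
      rw [← Matrix.permanent_transpose] at h
      simpa [Matrix.permanent] using h
    rw [this, mul_one]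
  · intro z _
    apply Integrable.const_mul
    apply integ
    unfold qf
    have := cont_entry A
    fun_prop
end

section
/- Let n ≥ 1 and let A be an n×n complex matrix. Consider the vector space W₀ of all functions φ : ({1,…,n} → {1,…,n}) → ℂ, with the symmetric group S_n acting by (σ · φ)(f) = φ(f ∘ σ), and let E : W₀ → W₀ be the linear map whose matrix in the standard basis is E(f, g) = ∫_{U(n)} ∏_{k=1}^n (u A u*)_{f(k), g(k)} du. Let V ⊆ W₀ be any S_n-invariant subspace. Then E maps V into itself, and the trace of the restriction of E to V equals Σ_{σ ∈ S_n} χ_V(σ) · ∫_{U(n)} ∏_{i=1}^n (u A u*)_{i, σ(i)} du, where χ_V(σ) is the trace of the action of σ on V. (Lemma 7.) -/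
open MeasureTheory Matrix
open scoped ComplexOrder

def tp {n : ℕ} (B : Matrix (Fin n) (Fin n) ℂ) : Matrix (Fin n → Fin n) (Fin n → Fin n) ℂ :=
  Matrix.of fun f g => ∏ k, B (f k) (g k)

theorem tp_mul {n : ℕ} (B C : Matrix (Fin n) (Fin n) ℂ) : tp (B * C) = tp B * tp C := by
  ext f g
  simp only [tp, Matrix.of_apply, Matrix.mul_apply]
  rw [Finset.prod_univ_sum]
  simp [Finset.prod_mul_distrib, Fintype.piFinset_univ]

theorem tp_one {n : ℕ} : tp (1 : Matrix (Fin n) (Fin n) ℂ) = 1 := by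
  ext f g
  simp only [tp, Matrix.of_apply, Matrix.one_apply]
  rw [Finset.prod_ite_zero]
  simp [funext_iff]

theorem tp_comm_of_diag {n : ℕ} (M : Matrix (Fin n → Fin n) (Fin n → Fin n) ℂ)
    (hM : ∀ v ∈ Matrix.unitaryGroup (Fin n) ℂ, Commute (tp v) M) (t : Fin n → ℂ) :
    Commute (tp (Matrix.diagonal t)) M := by
  have key : ∀ t : Fin n → ℂ, tp (Matrix.diagonal t) = Matrix.diagonal (fun f => ∏ k, t (f k)) := by
    intro t
    ext f g
    simp only [tp, Matrix.of_apply, Matrix.diagonal_apply]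
    rw [Finset.prod_ite_zero]
    simp [funext_iff]
  obtain ⟨z, hz⟩ : ∃ z : ℂ, IsPrimitiveRoot z (n + 1) :=
    ⟨_, Complex.isPrimitiveRoot_exp (n + 1) (by omega)⟩
  have hz1 : ‖z‖ = 1 := hz.norm'_eq_one (by omega)
  have hcount : ∀ f g : Fin n → Fin n, M f g ≠ 0 → ∀ j,
      (Finset.univ.filter (fun k => f k = j)).card = (Finset.univ.filter (fun k => g k = j)).card := by
    intro f g hfg j
    have hu : Matrix.diagonal (fun i => if i = j then z else 1) ∈ Matrix.unitaryGroup (Fin n) ℂ := by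
      rw [Matrix.mem_unitaryGroup_iff, Matrix.star_eq_conjTranspose, Matrix.diagonal_conjTranspose,
        Matrix.diagonal_mul_diagonal, ← Matrix.diagonal_one]
      congr 1
      ext i
      by_cases h : i = j
      · simp [h, Complex.mul_conj, Complex.normSq_eq_norm_sq, hz1]
      · simp [h]
    have h := hM _ hu
    rw [key] at h
    have h2 := congrFun (congrFun h.eq f) g
    rw [Matrix.diagonal_mul, Matrix.mul_diagonal, mul_comm] at h2
    have h3 := mul_left_cancel₀ hfg h2
    rw [Finset.prod_ite, Finset.prod_ite] at h3
    simp only [Finset.prod_const, one_pow, mul_one] at h3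
    refine hz.pow_inj ?_ ?_ h3
    · exact Nat.lt_succ_of_le ((Finset.card_le_univ _).trans (by simp))
    · exact Nat.lt_succ_of_le ((Finset.card_le_univ _).trans (by simp))
  rw [key]
  ext f g
  rw [Matrix.diagonal_mul, Matrix.mul_diagonal]
  by_cases hfg : M f g = 0
  · simp [hfg]
  rw [mul_comm]
  congr 1
  have hc : ∀ f : Fin n → Fin n,
      ∏ k, t (f k) = ∏ j, t j ^ (Finset.univ.filter (fun k => f k = j)).card := by
    intro f
    rw [← Finset.prod_fiberwise Finset.univ f]
    refine Finset.prod_congr rfl fun j _ => ?_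
    rw [← Finset.prod_const]
    refine Finset.prod_congr rfl fun k hk => ?_
    rw [(Finset.mem_filter.mp hk).2]
  rw [hc f, hc g]
  exact Finset.prod_congr rfl fun j _ => by rw [hcount f g hfg j]

theorem tp_comm_of_herm {n : ℕ} (M : Matrix (Fin n → Fin n) (Fin n → Fin n) ℂ)
    (hM : ∀ v ∈ Matrix.unitaryGroup (Fin n) ℂ, Commute (tp v) M) (H : Matrix (Fin n) (Fin n) ℂ)
    (hH : H.IsHermitian) : Commute (tp H) M := by
  have := hH.spectral_theorem
  rw [this, Unitary.conjStarAlgAut_apply, tp_mul, tp_mul]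
  refine Commute.mul_left (Commute.mul_left ?_ ?_) ?_
  · exact hM _ (Subtype.prop _)
  · exact tp_comm_of_diag M hM _
  · exact hM _ (star hH.eigenvectorUnitary).2

theorem tp_comm {n : ℕ} (M : Matrix (Fin n → Fin n) (Fin n → Fin n) ℂ)
    (hM : ∀ v ∈ Matrix.unitaryGroup (Fin n) ℂ, Commute (tp v) M) (B : Matrix (Fin n) (Fin n) ℂ) :
    Commute (tp B) M := by
  obtain ⟨X, Y, hX, hY, rfl⟩ : ∃ X Y : Matrix (Fin n) (Fin n) ℂ, X.IsHermitian ∧ Y.IsHermitian ∧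
      B = X + Complex.I • Y := 
    ⟨_, _, (realPart B).2, (imaginaryPart B).2, (realPart_add_I_smul_imaginaryPart B).symm⟩
  ext f g
  let p : (Fin n → Fin n) → (Fin n → Fin n) → Polynomial ℂ := fun f g =>
    ∏ k, (Polynomial.C (X (f k) (g k)) + Polynomial.X * Polynomial.C (Y (f k) (g k)))
  have hp : ∀ z f g, (p f g).eval z = tp (X + z • Y) f g := by
    intro z f g
    simp only [p, tp, Polynomial.eval_prod, Polynomial.eval_add, Polynomial.eval_mul, Polynomial.eval_C,
      Polynomial.eval_X, Matrix.of_apply, Matrix.add_apply, Matrix.smul_apply, smul_eq_mul]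
  let q : Polynomial ℂ := ∑ h, p f h * Polynomial.C (M h g) - ∑ h, Polynomial.C (M f h) * p h g
  have hq : ∀ z, q.eval z = (tp (X + z • Y) * M) f g - (M * tp (X + z • Y)) f g := by
    intro z
    simp [q, Polynomial.eval_finsetSum, hp, Matrix.mul_apply]
  have hq0 : q = 0 := by
    apply Polynomial.eq_zero_of_infinite_isRoot
    refine Set.Infinite.mono ?_ (Set.infinite_range_of_injective Complex.ofReal_injective)
    rintro _ ⟨x, rfl⟩
    have : (X + (x : ℂ) • Y).IsHermitian := by
      unfold Matrix.IsHermitian at *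
      simp [Matrix.conjTranspose_smul, hX, hY]
    simp only [Set.mem_ofPred_eq, Polynomial.IsRoot, hq, (tp_comm_of_herm M hM _ this).eq, sub_self]
  have := hq Complex.I
  rw [hq0, Polynomial.eval_zero] at this
  exact (sub_eq_zero.mp this.symm)

theorem eq_of_comm {n : ℕ} (M : Matrix (Fin n → Fin n) (Fin n → Fin n) ℂ)
    (hM : ∀ v ∈ Matrix.unitaryGroup (Fin n) ℂ, Commute (tp v) M) (f g : Fin n → Fin n) :
    M f g = ∑ σ : Equiv.Perm (Fin n), M id σ * if g = f ∘ σ then 1 else 0 := by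
  have h0 : ∀ h : Fin n → Fin n, ¬ Function.Bijective h → M id h = 0 := by
    intro h hh
    rw [← Finite.surjective_iff_bijective] at hh
    simp only [Function.Surjective, not_forall, not_exists] at hh
    obtain ⟨j, hj⟩ := hh
    have h1 := congrFun (congrFun (tp_comm M hM
      (Matrix.diagonal (fun i => if i = j then 0 else 1))).eq id) h
    have key : ∀ t : Fin n → ℂ,
        tp (Matrix.diagonal t) = Matrix.diagonal (fun f => ∏ k, t (f k)) := by
      intro t
      ext f g
      simp only [tp, Matrix.of_apply, Matrix.diagonal_apply]
      rw [Finset.prod_ite_zero]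
      simp [funext_iff]
    rw [key, Matrix.diagonal_mul, Matrix.mul_diagonal] at h1
    rw [Finset.prod_eq_zero (Finset.mem_univ j) (by simp)] at h1
    simpa [hj] using h1.symm
  have h1 := congrFun (congrFun (tp_comm M hM
      (Matrix.of fun i j => if j = f i then 1 else 0)).eq id) g
  have key : ∀ a b : Fin n → Fin n, tp (Matrix.of fun i j => if j = f i then (1 : ℂ) else 0) a b =
      if b = f ∘ a then 1 else 0 := by
    intro a b
    simp only [tp, Matrix.of_apply]
    rw [Finset.prod_ite_zero]
    simp [funext_iff]
  simp only [Matrix.mul_apply, key, Function.comp_id, ite_mul, one_mul, zero_mul,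
    Finset.sum_ite_eq', Finset.sum_ite_eq, Finset.mem_univ, if_true] at h1
  rw [h1]
  symm
  apply Finset.sum_of_injOn (fun σ : Equiv.Perm (Fin n) => (σ : Fin n → Fin n))
  · intro a _ b _ h
    exact DFunLike.coe_injective h
  · simp
  · intro h _ hh
    rw [h0 h, zero_mul]
    intro hb
    exact hh ⟨Equiv.ofBijective h hb, by simp, rfl⟩
  · intros; rfl

theorem conj_cont {n : ℕ} (A : Matrix (Fin n) (Fin n) ℂ) (f g : Fin n → Fin n) :
    Continuous fun u => ∏ k, (conjU A u) (f k) (g k) := by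
  have : Continuous (conjU A) := by
    unfold conjU
    fun_prop
  refine continuous_finsetProd _ fun k _ => ?_
  exact (this.matrix_elem _ _)

theorem conj_int {n : ℕ} (μ : Measure (Matrix.unitaryGroup (Fin n) ℂ))
    [IsProbabilityMeasure μ] (A : Matrix (Fin n) (Fin n) ℂ) (f g : Fin n → Fin n) :
    Integrable (fun u => ∏ k, (conjU A u) (f k) (g k)) μ := by
  refine Integrable.of_bound (C := ∏ k : Fin n, ∑ i, ∑ j, ‖A i j‖)
    (conj_cont A f g).aestronglyMeasurable ?_
  refine Filter.Eventually.of_forall fun u => ?_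
  rw [norm_prod]
  refine Finset.prod_le_prod (fun _ _ => norm_nonneg _) fun k _ => ?_
  simp only [conjU, Matrix.mul_apply, Finset.sum_mul]
  rw [Finset.sum_comm]
  refine (norm_sum_le _ _).trans (Finset.sum_le_sum fun i _ => ?_)
  refine (norm_sum_le _ _).trans (Finset.sum_le_sum fun j _ => ?_)
  rw [norm_mul, norm_mul]
  have h1 := entry_norm_bound_of_unitary u.2 (f k) i
  have h2 : ‖(star (u : Matrix (Fin n) (Fin n) ℂ)) j (g k)‖ ≤ 1 :=
    entry_norm_bound_of_unitary (star u).2 j (g k)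
  calc _ ≤ 1 * ‖A i j‖ * 1 := by gcongr
    _ = _ := by ring

theorem M_comm {n : ℕ} (μ : Measure (Matrix.unitaryGroup (Fin n) ℂ))
    [μ.IsMulLeftInvariant] [IsProbabilityMeasure μ] (A : Matrix (Fin n) (Fin n) ℂ)
    (v : Matrix (Fin n) (Fin n) ℂ) (hv : v ∈ Matrix.unitaryGroup (Fin n) ℂ) :
    Commute (tp v) (Matrix.of fun f g => ∫ u, ∏ k, (conjU A u) (f k) (g k) ∂μ) := by
  set M : Matrix (Fin n → Fin n) (Fin n → Fin n) ℂ :=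
    Matrix.of fun f g => ∫ u, ∏ k, (conjU A u) (f k) (g k) ∂μ with hMdef
  have h : M = tp v * M * tp (star v) := by
    ext f g
    have e : ∀ u, ∏ k, (conjU A (⟨v, hv⟩ * u)) (f k) (g k) =
        ∑ b, (∑ a, tp v f a * ∏ k, (conjU A u) (a k) (b k)) * tp (star v) b g := by
      intro u
      have : tp (conjU A (⟨v, hv⟩ * u)) = tp v * tp (conjU A u) * tp (star v) := by
        rw [← tp_mul, ← tp_mul]
        simp [conjU, Matrix.mul_assoc]
      have := congrFun (congrFun this f) g
      simp only [Matrix.mul_apply] at this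
      exact this
    calc M f g = ∫ u, ∏ k, (conjU A u) (f k) (g k) ∂μ := rfl
      _ = ∫ u, ∏ k, (conjU A (⟨v, hv⟩ * u)) (f k) (g k) ∂μ :=
        (integral_mul_left_eq_self (μ := μ) (fun u => ∏ k, (conjU A u) (f k) (g k)) ⟨v, hv⟩).symm
      _ = ∑ b, (∑ a, tp v f a * ∫ u, ∏ k, (conjU A u) (a k) (b k) ∂μ) * tp (star v) b g := by
        simp only [e]
        rw [integral_finsetSum]
        · refine Finset.sum_congr rfl fun b _ => ?_
          rw [integral_mul_const, integral_finsetSum]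
          · simp only [integral_const_mul]
          · exact fun a _ => (conj_int μ A a b).const_mul _
        · exact fun b _ => (integrable_finsetSum _
            fun a _ => (conj_int μ A a b).const_mul _).mul_const _
      _ = _ := by simp only [Matrix.mul_apply, hMdef, Matrix.of_apply]
  have h2 : tp (star v) * tp v = 1 := by
    rw [← tp_mul, Matrix.mem_unitaryGroup_iff'.mp hv, tp_one]
  show tp v * M = M * tp v
  conv_rhs => rw [h, Matrix.mul_assoc, h2, Matrix.mul_one]

theorem stmt13 (n : ℕ) (hn : 1 ≤ n)
    (μ : Measure (Matrix.unitaryGroup (Fin n) ℂ))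
    [μ.IsMulLeftInvariant] [IsProbabilityMeasure μ]
    (A : Matrix (Fin n) (Fin n) ℂ)
    (E : ((Fin n → Fin n) → ℂ) →ₗ[ℂ] ((Fin n → Fin n) → ℂ))
    (hE : ∀ (φ : (Fin n → Fin n) → ℂ) (f : Fin n → Fin n),
      E φ f = ∑ g : Fin n → Fin n, (∫ u, ∏ k, (conjU A u) (f k) (g k) ∂μ) * φ g)
    (P : Equiv.Perm (Fin n) → (((Fin n → Fin n) → ℂ) →ₗ[ℂ] ((Fin n → Fin n) → ℂ)))
    (hP : ∀ (σ : Equiv.Perm (Fin n)) (φ : (Fin n → Fin n) → ℂ) (f : Fin n → Fin n),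
      P σ φ f = φ (f ∘ σ))
    (V : Submodule ℂ ((Fin n → Fin n) → ℂ))
    (hVinv : ∀ σ : Equiv.Perm (Fin n), ∀ x ∈ V, P σ x ∈ V) :
    (∀ x ∈ V, E x ∈ V) ∧
      ∀ (hEV : ∀ x ∈ V, E x ∈ V),
        LinearMap.trace ℂ V (E.restrict hEV) =
          ∑ σ : Equiv.Perm (Fin n),
            LinearMap.trace ℂ V ((P σ).restrict (hVinv σ)) *
              ∫ u, ∏ i, (conjU A u) i (σ i) ∂μ := by
  have hPE : E = ∑ σ : Equiv.Perm (Fin n), (∫ u, ∏ i, (conjU A u) i (σ i) ∂μ) • P σ := by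
    refine LinearMap.ext fun φ => funext fun f => ?_
    rw [hE]
    have h := eq_of_comm _ (M_comm μ A) f
    simp only [Matrix.of_apply, id] at h
    simp only [h, Finset.sum_mul, LinearMap.sum_apply, Finset.sum_apply, LinearMap.smul_apply,
      Pi.smul_apply, smul_eq_mul, hP]
    rw [Finset.sum_comm]
    simp
  have hEV : ∀ x ∈ V, E x ∈ V := by
    intro x hx
    rw [hPE, LinearMap.sum_apply]
    exact V.sum_mem fun σ _ => V.smul_mem _ (hVinv σ x hx)
  refine ⟨hEV, fun hEV => ?_⟩
  have hr : E.restrict hEV = ∑ σ : Equiv.Perm (Fin n),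
      (∫ u, ∏ i, (conjU A u) i (σ i) ∂μ) • (P σ).restrict (hVinv σ) := by
    refine LinearMap.ext fun x => Subtype.ext ?_
    simp only [LinearMap.coe_restrict_apply, LinearMap.sum_apply, LinearMap.smul_apply,
      Submodule.coe_sum, Submodule.coe_smul]
    conv_lhs => rw [hPE]
    simp only [LinearMap.sum_apply, LinearMap.smul_apply]
  rw [hr, map_sum]
  refine Finset.sum_congr rfl fun σ _ => ?_
  rw [map_smul, smul_eq_mul, mul_comm]
end

section
/- Let n ≥ 1, let 1 ≤ m ≤ n, let A be an n×n complex matrix, and let σ and τ be permutations of {1,…,m}. Then ∫_{U(n)} ∏_{i=1}^m (u A u*)_{i, (τ σ τ⁻¹)(i)} du = ∫_{U(n)} ∏_{i=1}^m (u A u*)_{i, σ(i)} du; that is, the function I(A, σ) = ∫_{U(n)} ∏_{i=1}^m (u A u*)_{i, σ(i)} du is a class function of σ ∈ S_m. (Consequence of Theorem 9.) -/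
open MeasureTheory Matrix
open scoped ComplexOrder

theorem stmt15_perm_unitary {n : ℕ} (ρ : Equiv.Perm (Fin n)) :
    (1 : Matrix (Fin n) (Fin n) ℂ).submatrix ρ id ∈ Matrix.unitaryGroup (Fin n) ℂ := by
  rw [Matrix.mem_unitaryGroup_iff, Matrix.star_eq_conjTranspose, Matrix.conjTranspose_submatrix,
    Matrix.conjTranspose_one,
    ← Matrix.submatrix_mul _ _ ρ id ρ Function.bijective_id]
  simp

theorem stmt15_conj {n : ℕ} (ρ : Equiv.Perm (Fin n)) (A : Matrix (Fin n) (Fin n) ℂ)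
    (u : Matrix.unitaryGroup (Fin n) ℂ) (i j : Fin n) :
    conjU A (⟨_, stmt15_perm_unitary ρ⟩ * u) i j = conjU A u (ρ i) (ρ j) := by
  have h : ∀ M : Matrix (Fin n) (Fin n) ℂ,
      (1 : Matrix (Fin n) (Fin n) ℂ).submatrix ρ id * M = M.submatrix ρ id := by
    intro M
    ext a b
    simp [Matrix.mul_apply, Matrix.one_apply]
  simp only [conjU, Submonoid.coe_mul, h]
  simp [Matrix.mul_apply, Matrix.star_apply]

theorem stmt15 (n m : ℕ) (hm1 : 1 ≤ m) (hmn : m ≤ n)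
    (μ : Measure (Matrix.unitaryGroup (Fin n) ℂ))
    [μ.IsMulLeftInvariant] [IsProbabilityMeasure μ]
    (A : Matrix (Fin n) (Fin n) ℂ) (σ τ : Equiv.Perm (Fin m)) :
    ∫ u, ∏ i : Fin m, (conjU A u) (Fin.castLE hmn i) (Fin.castLE hmn ((τ * σ * τ⁻¹) i)) ∂μ =
      ∫ u, ∏ i : Fin m, (conjU A u) (Fin.castLE hmn i) (Fin.castLE hmn (σ i)) ∂μ := by
  have hρ : ∀ i, (Equiv.Perm.viaFintypeEmbedding τ⁻¹ (Fin.castLEEmb hmn)) (Fin.castLE hmn i)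
      = Fin.castLE hmn (τ⁻¹ i) := fun i =>
    Equiv.Perm.viaFintypeEmbedding_apply_image τ⁻¹ (Fin.castLEEmb hmn) i
  rw [← integral_mul_left_eq_self _ (⟨_, stmt15_perm_unitary
    (Equiv.Perm.viaFintypeEmbedding τ⁻¹ (Fin.castLEEmb hmn))⟩ : Matrix.unitaryGroup (Fin n) ℂ)]
  congr 1
  ext u
  simp only [stmt15_conj, hρ]
  rw [← Equiv.prod_comp τ⁻¹ (fun i => conjU A u (Fin.castLE hmn i) (Fin.castLE hmn (σ i)))]
  simp [Equiv.Perm.mul_apply]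
end
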